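/- arXiv:2306.14648 — 2 statements merged into one kernel-verified Lean document; each statement's English description precedes it below -/
import Mathlib

section
/- Let n ∈ ℕ, 0 < α, γ ≤ 1, Δ ∈ ℕ. There exists a constant c₁ = c₁(α, γ, Δ) > 0 such that the following holds for all sufficiently large n. Let T' be an oriented tree on n' vertices with n/2 ≤ n' ≤ n and maximum total degree at most Δ, let V ⊆ V(T') have size γn such that S = {(v, N⁺_{T'}(v), N⁻_{T'}(v)) : v ∈ V} is a set of vertex-disjoint stars, let D be an n-vertex digraph with minimum semidegree at least αn, and let φ: V(T') → V(D) be a uniformly random injective map. Then, with probability tending to 1 as n → ∞, for all u, w ∈ V(D) and * ∈ {+, −}, the number of stars in S that are (u,*,w)-absorbing under φ is at least c₁n. -/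
/-!
Resampling the value `φ x` of a uniformly random injection `φ : V ↪ W` at a single point, by a
swap, shows that `φ x ∈ A` has conditional probability at least `(|A| - |G|) / |W|` given the values
of `φ` on any `G ∌ x`. Exposing pairwise disjoint stars one after another, as long as they cover
only `α n / 2` vertices, each of them is therefore absorbing with conditional probability at least
`p ^ (Δ + 1)`, where `p = α / 2`. This bounds the probability generating function of the number of
absorbing stars by that of a binomial variable, so Chernoff's argument makes the probability of
fewer than `c n` absorbing stars exponentially small, which survives the union bound over the
`2 n ^ 2` choices of `(u, *, w)`.
-/

section UnionAndTailBounds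

lemma one_sub_card_mul_mul_card_le_card_forall {Ω J : Type*} [Finite Ω] [Fintype J]
    {P : J → Ω → Prop} {q : ℝ} (hq : ∀ j, ({ω | ¬ P j ω}.ncard : ℝ) ≤ q * Nat.card Ω) :
    (1 - Fintype.card J * q) * Nat.card Ω ≤ Nat.card {ω // ∀ j, P j ω} := by
  have compl_eq : {ω | ∀ j, P j ω}ᶜ = ⋃ j, {ω | ¬ P j ω} := by
    ext
    simp
  have compl_le : (({ω | ∀ j, P j ω}ᶜ).ncard : ℝ) ≤ Fintype.card J * q * Nat.card Ω :=
    calc (({ω | ∀ j, P j ω}ᶜ).ncard : ℝ) ≤ ∑ j, ({ω | ¬ P j ω}.ncard : ℝ) := by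
          rw [compl_eq]
          exact_mod_cast Set.ncard_iUnion_le_of_fintype _
      _ ≤ ∑ _j : J, q * Nat.card Ω := Finset.sum_le_sum fun j _ ↦ hq j
      _ = Fintype.card J * q * Nat.card Ω := by
          rw [Finset.sum_const, Finset.card_univ, nsmul_eq_mul, mul_assoc]
  have ncard_add : (({ω | ∀ j, P j ω}.ncard : ℝ)) + ({ω | ∀ j, P j ω}ᶜ).ncard = Nat.card Ω := by
    exact_mod_cast Set.ncard_add_ncard_compl _
  change _ ≤ (({ω | ∀ j, P j ω}.ncard : ℝ))
  linarith

lemma ncard_lt_le_exp_mul_sum_exp_neg {Ω : Type*} [Fintype Ω] (X : Ω → ℝ) (t : ℝ) :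
    ({ω | X ω < t}.ncard : ℝ) ≤ Real.exp t * ∑ ω, Real.exp (-X ω) := by
  classical
  calc ({ω | X ω < t}.ncard : ℝ) = ∑ ω with X ω < t, (1 : ℝ) := by
        simp [Set.ncard_eq_toFinset_card']
    _ ≤ ∑ ω with X ω < t, Real.exp (t - X ω) := Finset.sum_le_sum fun ω hω ↦
        Real.one_le_exp (sub_nonneg.2 (Finset.mem_filter.1 hω).2.le)
    _ ≤ ∑ ω, Real.exp (t - X ω) :=
        Finset.sum_le_sum_of_subset_of_nonneg (Finset.filter_subset _ _)
          fun ω _ _ ↦ (Real.exp_pos _).le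
    _ = Real.exp t * ∑ ω, Real.exp (-X ω) := by
        simp only [sub_eq_add_neg, Real.exp_add, Finset.mul_sum]

open Filter Topology in
lemma tendsto_pow_mul_exp_sub_mul_atTop_nhds_zero (k : ℕ) (b : ℝ) {c : ℝ} (hc : 0 < c) :
    Tendsto (fun n : ℕ ↦ (n : ℝ) ^ k * Real.exp (b - c * n)) atTop (𝓝 0) := by
  have ratio_lt_one : |Real.exp (-c)| < 1 := by
    rwa [abs_of_pos (Real.exp_pos _), Real.exp_lt_one_iff, neg_lt_zero]
  convert (tendsto_pow_const_mul_const_pow_of_abs_lt_one k ratio_lt_one).const_mul (Real.exp b)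
    using 2 with n
  · rw [← Real.exp_nat_mul, sub_eq_add_neg, Real.exp_add]
    ring_nf
  · rw [mul_zero]

end UnionAndTailBounds

section Resampling

open Finset

variable {V W : Type*} [DecidableEq W]

lemma card_sub_mul_le_sum_setValue [DecidableEq V] {f : (V → W) → ℝ} {G : Finset V}
    (hfG : DependsOn f G) (hf : 0 ≤ f) {x : V} (hx : x ∉ G) (A : Finset W) (φ : V ↪ W) :
    ((#A : ℝ) - #G) * f φ ≤ ∑ b ∈ A, f (φ.setValue x b) := by
  have setValue_eq : ∀ b ∈ A \ G.image φ, f (φ.setValue x b) = f φ := fun b hb ↦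
    hfG fun y hy ↦ Function.Embedding.setValue_eq_of_ne (by rintro rfl; exact hx hy)
      (by rintro rfl; exact (mem_sdiff.1 hb).2 (mem_image_of_mem φ hy))
  have card_le : (#A : ℝ) - #G ≤ #(A \ G.image φ) := by
    have h_sdiff := le_card_sdiff (G.image φ) A
    have h_image := card_image_le (s := G) (f := φ)
    rw [sub_le_iff_le_add]
    exact_mod_cast (by omega : #A ≤ #(A \ G.image φ) + #G)
  calc ((#A : ℝ) - #G) * f φ ≤ #(A \ G.image φ) * f φ := mul_le_mul_of_nonneg_right card_le (hf φ)
    _ = ∑ b ∈ A \ G.image φ, f (φ.setValue x b) := by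
        rw [sum_congr rfl setValue_eq, sum_const, nsmul_eq_mul]
    _ ≤ ∑ b ∈ A, f (φ.setValue x b) :=
        sum_le_sum_of_subset_of_nonneg sdiff_subset fun b _ _ ↦ hf _

variable [Fintype V] [Fintype W]

lemma card_nsmul_sum_filter_apply_mem [DecidableEq V] {M : Type*} [AddCommMonoid M]
    (f : (V ↪ W) → M) (x : V) (A : Finset W) :
    Fintype.card W • ∑ φ with φ x ∈ A, f φ = ∑ φ : V ↪ W, ∑ b ∈ A, f (φ.setValue x b) := by
  have setValue_setValue (φ : V ↪ W) (b : W) : (φ.setValue x b).setValue x (φ x) = φ := by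
    ext y
    simp only [Function.Embedding.setValue, Function.Embedding.coeFn_mk]
    grind [φ.injective.eq_iff]
  calc Fintype.card W • ∑ φ with φ x ∈ A, f φ
      = ∑ q ∈ (univ.filter fun φ : V ↪ W ↦ φ x ∈ A) ×ˢ (univ : Finset W), f q.1 := by
        simp only [sum_product, sum_const, card_univ, smul_sum]
    _ = ∑ q ∈ (univ : Finset (V ↪ W)) ×ˢ A, f (q.1.setValue x q.2) :=
        sum_nbij' (fun q ↦ (q.1.setValue x q.2, q.1 x)) (fun q ↦ (q.1.setValue x q.2, q.1 x))
          (by simp) (by simp) (by simp [setValue_setValue]) (by simp [setValue_setValue])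
          (by simp [setValue_setValue])
    _ = ∑ φ : V ↪ W, ∑ b ∈ A, f (φ.setValue x b) := sum_product ..

lemma mul_sum_le_sum_filter_apply_mem {f : (V → W) → ℝ} {G : Finset V}
    (hfG : DependsOn f G) (hf : 0 ≤ f) {x : V} (hx : x ∉ G) {A : Finset W} {p : ℝ}
    (hA : p * Fintype.card W + #G ≤ #A) :
    p * ∑ φ : V ↪ W, f φ ≤ ∑ φ : V ↪ W with φ x ∈ A, f φ := by
  classical
  rcases isEmpty_or_nonempty (V ↪ W) with _ | ⟨⟨φ₀⟩⟩
  · simp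
  have : Nonempty W := ⟨φ₀ x⟩
  refine le_of_mul_le_mul_left ?_ (Nat.cast_pos.2 (Fintype.card_pos (α := W)) : (0 : ℝ) < _)
  calc (Fintype.card W : ℝ) * (p * ∑ φ : V ↪ W, f φ)
      = ∑ φ : V ↪ W, p * Fintype.card W * f φ := by rw [← mul_sum]; ring
    _ ≤ ∑ φ : V ↪ W, ∑ b ∈ A, f (φ.setValue x b) := sum_le_sum fun φ _ ↦
        (mul_le_mul_of_nonneg_right (by linarith) (hf φ)).trans
          (card_sub_mul_le_sum_setValue hfG hf hx A φ)
    _ = Fintype.card W * ∑ φ : V ↪ W with φ x ∈ A, f φ := by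
        rw [← card_nsmul_sum_filter_apply_mem (fun φ ↦ f φ), nsmul_eq_mul]

lemma pow_card_mul_sum_le_sum_filter {f : (V → W) → ℝ} {G : Finset V}
    (hfG : DependsOn f G) (hf : 0 ≤ f) {F : Finset V} (hFG : Disjoint F G) {A : V → Finset W}
    {p : ℝ} (hp : 0 ≤ p) (hA : ∀ x ∈ F, p * Fintype.card W + (#G + #F : ℕ) ≤ #(A x)) :
    p ^ #F * ∑ φ : V ↪ W, f φ ≤ ∑ φ : V ↪ W with ∀ x ∈ F, φ x ∈ A x, f φ := by
  induction F using Finset.cons_induction_on with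
  | empty => simp
  | cons x F hxF ih =>
    replace hFG : x ∉ G ∧ Disjoint F G :=
      ⟨disjoint_left.1 hFG (mem_cons_self x F), hFG.mono_left (subset_cons hxF)⟩
    rw [card_cons] at hA ⊢
    let f' : (V → W) → ℝ := fun g ↦ if ∀ y ∈ F, g y ∈ A y then f g else 0
    have f'_dependsOn : DependsOn f' (F.disjUnion G hFG.2) := fun g h hgh ↦ by
      have agree_on_F : (∀ y ∈ F, g y ∈ A y) ↔ ∀ y ∈ F, h y ∈ A y :=
        forall₂_congr fun y hy ↦ by rw [hgh y (by simp [hy])]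
      simp only [f', agree_on_F, hfG fun y hy ↦ hgh y (by simp [mem_coe.1 hy])]
    have f'_nonneg : 0 ≤ f' := fun g ↦ by simp only [f']; split_ifs; exacts [hf g, le_rfl]
    have hAx : p * Fintype.card W + #(F.disjUnion G hFG.2) ≤ #(A x) := by
      refine le_trans ?_ (hA x (mem_cons_self x F))
      rw [card_disjUnion]
      push_cast
      linarith
    calc p ^ (#F + 1) * ∑ φ : V ↪ W, f φ = p * (p ^ #F * ∑ φ : V ↪ W, f φ) := by ring
      _ ≤ p * ∑ φ : V ↪ W with ∀ y ∈ F, φ y ∈ A y, f φ := by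
          refine mul_le_mul_of_nonneg_left (ih hFG.2 fun y hy ↦ ?_) hp
          refine le_trans ?_ (hA y (mem_cons_of_mem hy))
          gcongr
          omega
      _ = p * ∑ φ : V ↪ W, f' φ := by rw [sum_filter]
      _ ≤ ∑ φ : V ↪ W with φ x ∈ A x, f' φ :=
          mul_sum_le_sum_filter_apply_mem f'_dependsOn f'_nonneg (by simp [hFG.1, hxF]) hAx
      _ = ∑ φ : V ↪ W with ∀ y ∈ cons x F hxF, φ y ∈ A y, f φ := by
          simp only [f', ← sum_filter, filter_filter, forall_mem_cons]

end Resampling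

section Hits

open Finset

variable {V W ι : Type*} [DecidableEq W]

/-- The indices `i ∈ I` whose block `F i` is mapped by `g` into its targets: every `x ∈ F i` lands
in `A i x`. A target may depend on the block as well as on the vertex. -/
def hits (I : Finset ι) (F : ι → Finset V) (A : ι → V → Finset W) (g : V → W) : Finset ι :=
  {i ∈ I | ∀ x ∈ F i, g x ∈ A i x}

lemma mem_hits {I : Finset ι} {F : ι → Finset V} {A : ι → V → Finset W} {g : V → W} {i : ι} :
    i ∈ hits I F A g ↔ i ∈ I ∧ ∀ x ∈ F i, g x ∈ A i x :=
  mem_filter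

lemma hits_mono {I I' : Finset ι} (hI : I ⊆ I') (F : ι → Finset V) (A : ι → V → Finset W)
    (g : V → W) : hits I F A g ⊆ hits I' F A g :=
  filter_subset_filter _ hI

lemma dependsOn_hits (I : Finset ι) (F : ι → Finset V) (A : ι → V → Finset W) :
    DependsOn (hits I F A) (⋃ i ∈ I, F i) := fun g h hgh ↦
  filter_congr fun i hi ↦ forall₂_congr fun x hx ↦ by rw [hgh x (Set.mem_biUnion hi hx)]

lemma pow_card_hits_cons {I : Finset ι} {j : ι} (hj : j ∉ I) (F : ι → Finset V)
    (A : ι → V → Finset W) (s : ℝ) (g : V → W) :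
    s ^ #(hits (I.cons j hj) F A g) = s ^ #(hits I F A g) -
      (1 - s) * if ∀ x ∈ F j, g x ∈ A j x then s ^ #(hits I F A g) else 0 := by
  simp only [hits, filter_cons]
  split_ifs
  · rw [card_cons]
    ring
  · ring

lemma sum_pow_card_hits_le [Fintype V] [Fintype W] {I : Finset ι} {F : ι → Finset V}
    {A : ι → V → Finset W} {p s : ℝ}
    (hp : 0 ≤ p) (hp1 : p ≤ 1) (hs : 0 ≤ s) (hs1 : s ≤ 1) (hF : (I : Set ι).PairwiseDisjoint F)
    (hA : ∀ i ∈ I, ∀ x ∈ F i, p * Fintype.card W + (∑ i ∈ I, #(F i) : ℕ) ≤ #(A i x)) :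
    ∑ φ : V ↪ W, s ^ #(hits I F A φ) ≤
      (∏ i ∈ I, (1 - (1 - s) * p ^ #(F i))) * Fintype.card (V ↪ W) := by
  induction I using Finset.cons_induction_on with
  | empty => simp [hits]
  | cons j I hj ih =>
    have hFI : (I : Set ι).PairwiseDisjoint F := hF.subset (by simp)
    have hFj : Disjoint (F j) (I.disjiUnion F hFI) := (disjoint_disjiUnion_right ..).2 fun i hi ↦
      hF (by simp) (by simp [hi]) (by rintro rfl; exact hj hi)
    have dependsOn_disjiUnion : DependsOn (fun g ↦ s ^ #(hits I F A g)) (I.disjiUnion F hFI) :=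
      fun g h hgh ↦ by
        simp only [dependsOn_hits I F A fun x hx ↦ hgh x (by simpa using hx)]
    simp only [sum_cons] at hA
    have ih : ∑ φ : V ↪ W, s ^ #(hits I F A φ) ≤
        (∏ i ∈ I, (1 - (1 - s) * p ^ #(F i))) * Fintype.card (V ↪ W) := by
      refine ih hFI fun i hi x hx ↦ le_trans ?_ (hA i (mem_cons_of_mem hi) x hx)
      gcongr
      exact Nat.le_add_left ..
    have sum_hit_j : p ^ #(F j) * ∑ φ : V ↪ W, s ^ #(hits I F A φ) ≤
        ∑ φ : V ↪ W with ∀ x ∈ F j, φ x ∈ A j x, s ^ #(hits I F A φ) :=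
      pow_card_mul_sum_le_sum_filter dependsOn_disjiUnion (fun g ↦ pow_nonneg hs _) hFj hp
        fun x hx ↦ by
          rw [card_disjiUnion, add_comm (∑ i ∈ I, #(F i))]
          exact hA j (mem_cons_self j I) x hx
    have factor_nonneg : 0 ≤ 1 - (1 - s) * p ^ #(F j) := sub_nonneg.2 <|
      mul_le_one₀ (by linarith) (pow_nonneg hp _) (pow_le_one₀ hp hp1)
    calc ∑ φ : V ↪ W, s ^ #(hits (I.cons j hj) F A φ)
        = ∑ φ : V ↪ W, s ^ #(hits I F A φ) -
            (1 - s) * ∑ φ : V ↪ W with ∀ x ∈ F j, φ x ∈ A j x, s ^ #(hits I F A φ) := by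
          simp only [pow_card_hits_cons, sum_sub_distrib, mul_sum, sum_filter]
      _ ≤ (1 - (1 - s) * p ^ #(F j)) * ∑ φ : V ↪ W, s ^ #(hits I F A φ) := by
          linarith [mul_le_mul_of_nonneg_left sum_hit_j (sub_nonneg.2 hs1)]
      _ ≤ (1 - (1 - s) * p ^ #(F j)) *
            ((∏ i ∈ I, (1 - (1 - s) * p ^ #(F i))) * Fintype.card (V ↪ W)) := by gcongr
      _ = (∏ i ∈ I.cons j hj, (1 - (1 - s) * p ^ #(F i))) * Fintype.card (V ↪ W) := by
          rw [prod_cons, mul_assoc]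

lemma prod_one_sub_mul_pow_le_exp {p : ℝ} (hp : 0 ≤ p) (hp1 : p ≤ 1) {I : Finset ι} {m : ι → ℕ}
    {d : ℕ} (hm : ∀ i ∈ I, m i ≤ d) :
    ∏ i ∈ I, (1 - (1 - Real.exp (-1)) * p ^ m i) ≤ Real.exp (-(p ^ d / 2 * #I)) := by
  have half_lt : 1 / 2 < 1 - Real.exp (-1) := by linarith [Real.exp_neg_one_lt_half]
  have factor_nonneg : ∀ i ∈ I, 0 ≤ 1 - (1 - Real.exp (-1)) * p ^ m i := fun i _ ↦
    sub_nonneg.2 <| mul_le_one₀ (by linarith [Real.exp_pos (-1)]) (pow_nonneg hp _)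
      (pow_le_one₀ hp hp1)
  have factor_le : ∀ i ∈ I, 1 - (1 - Real.exp (-1)) * p ^ m i ≤ Real.exp (-(p ^ d / 2)) :=
    fun i hi ↦ calc
      1 - (1 - Real.exp (-1)) * p ^ m i ≤ 1 - 1 / 2 * p ^ d :=
        sub_le_sub_left (mul_le_mul half_lt.le (pow_le_pow_of_le_one hp hp1 (hm i hi))
          (pow_nonneg hp d) (by linarith)) 1
      _ ≤ Real.exp (-(p ^ d / 2)) := by linarith [Real.add_one_le_exp (-(p ^ d / 2))]
  calc ∏ i ∈ I, (1 - (1 - Real.exp (-1)) * p ^ m i)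
      ≤ ∏ _i ∈ I, Real.exp (-(p ^ d / 2)) := prod_le_prod factor_nonneg factor_le
    _ = Real.exp (-(p ^ d / 2 * #I)) := by
        rw [prod_const, ← Real.exp_nat_mul]
        ring_nf

variable [Finite V] [Fintype W]

lemma ncard_card_hits_lt_le {I : Finset ι} {F : ι → Finset V} {A : ι → V → Finset W} {p : ℝ}
    (hp : 0 ≤ p) (hp1 : p ≤ 1) {d : ℕ} (hd : ∀ i ∈ I, #(F i) ≤ d)
    (hF : (I : Set ι).PairwiseDisjoint F)
    (hA : ∀ i ∈ I, ∀ x ∈ F i, p * Fintype.card W + (#I * d : ℕ) ≤ #(A i x)) (t : ℝ) :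
    ({φ : V ↪ W | (#(hits I F A φ) : ℝ) < t}.ncard : ℝ) ≤
      Real.exp (t - p ^ d / 2 * #I) * Nat.card (V ↪ W) := by
  cases nonempty_fintype V
  have sum_le := sum_pow_card_hits_le hp hp1 (Real.exp_pos (-1)).le
    (Real.exp_le_one_iff.2 (by norm_num)) hF fun i hi x hx ↦ by
      refine le_trans ?_ (hA i hi x hx)
      gcongr
      exact sum_le_card_nsmul I _ d hd
  calc ({φ : V ↪ W | (#(hits I F A φ) : ℝ) < t}.ncard : ℝ)
      ≤ Real.exp t * ∑ φ : V ↪ W, Real.exp (-1) ^ #(hits I F A φ) := by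
        simpa only [← Real.exp_nat_mul, mul_neg_one] using
          ncard_lt_le_exp_mul_sum_exp_neg (fun φ : V ↪ W ↦ (#(hits I F A φ) : ℝ)) t
    _ ≤ Real.exp t * (Real.exp (-(p ^ d / 2 * #I)) * Nat.card (V ↪ W)) := by
        rw [Nat.card_eq_fintype_card]
        gcongr
        exact sum_le.trans (by gcongr; exact prod_one_sub_mul_pow_le_exp hp hp1 hd)
    _ = Real.exp (t - p ^ d / 2 * #I) * Nat.card (V ↪ W) := by
        rw [← mul_assoc, ← Real.exp_add, sub_eq_add_neg]

/-- The constant `c₁(α, γ, Δ)` of the theorem is `absorptionRate α γ (Δ + 1)`: exposing a proportion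
`min γ (α / (2 * d))` of disjoint blocks of size at most `d` uses up at most half of each target of
density `α`, so each exposed block is hit with conditional probability at least `(α / 2) ^ d`. The
remaining factor `1 / 4` leaves room for the large deviation bound. -/
noncomputable def absorptionRate (α γ : ℝ) (d : ℕ) : ℝ :=
  (α / 2) ^ d * min γ (α / (2 * d)) / 4

lemma absorptionRate_pos {α γ : ℝ} (hα : 0 < α) (hγ : 0 < γ) {d : ℕ} (hd : 0 < d) :
    0 < absorptionRate α γ d := by
  have : 0 < min γ (α / (2 * d)) := lt_min hγ (by positivity)
  unfold absorptionRate
  positivity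

lemma exists_nat_absorptionRate_mul_sub_le {α γ : ℝ} (hα : 0 ≤ α) (hα1 : α ≤ 1) (hγ : 0 ≤ γ)
    (d n : ℕ) :
    ∃ k : ℕ, (k : ℝ) ≤ γ * n ∧ (k * d : ℝ) ≤ α / 2 * n ∧
      absorptionRate α γ d * n - (α / 2) ^ d / 2 * k ≤ 1 - absorptionRate α γ d * n := by
  set δ := min γ (α / (2 * d)) with hδ
  have : 0 ≤ δ := le_min hγ (by positivity)
  have δ_mul_le : δ * d ≤ α / 2 :=
    calc δ * d ≤ α / (2 * d) * d := by gcongr; exact min_le_right ..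
      _ = α / 2 * (d / d) := by ring
      _ ≤ α / 2 := mul_le_of_le_one_right (by positivity) (div_self_le_one _)
  have floor_le : (⌊δ * n⌋₊ : ℝ) ≤ δ * n := Nat.floor_le (by positivity)
  refine ⟨⌊δ * n⌋₊, floor_le.trans (by gcongr; exact min_le_left ..), ?_, ?_⟩
  · calc (⌊δ * n⌋₊ * d : ℝ) ≤ δ * n * d := by gcongr
      _ = δ * d * n := by ring
      _ ≤ α / 2 * n := by gcongr
  · have pow_le_one : (α / 2) ^ d ≤ 1 := pow_le_one₀ (by linarith) (by linarith)
    have pow_mul_floor : (α / 2) ^ d / 2 * (δ * n - 1) ≤ (α / 2) ^ d / 2 * ⌊δ * n⌋₊ :=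
      mul_le_mul_of_nonneg_left (Nat.sub_one_lt_floor _).le (by positivity)
    have rate_mul : absorptionRate α γ d * n = (α / 2) ^ d / 2 * (δ * n) / 2 := by
      rw [absorptionRate, hδ]
      ring
    linarith

lemma ncard_card_hits_lt_absorptionRate_le {I : Finset ι} {F : ι → Finset V}
    {A : ι → V → Finset W} {α γ : ℝ} (hα : 0 ≤ α) (hα1 : α ≤ 1) (hγ : 0 ≤ γ) {d : ℕ}
    (hd : ∀ i ∈ I, #(F i) ≤ d) (hF : (I : Set ι).PairwiseDisjoint F)
    (hI : γ * Fintype.card W ≤ #I) (hA : ∀ i ∈ I, ∀ x ∈ F i, α * Fintype.card W ≤ #(A i x)) :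
    ({φ : V ↪ W | (#(hits I F A φ) : ℝ) < absorptionRate α γ d * Fintype.card W}.ncard : ℝ) ≤
      Real.exp (1 - absorptionRate α γ d * Fintype.card W) * Nat.card (V ↪ W) := by
  obtain ⟨k, k_le, k_mul_le, exponent_le⟩ :=
    exists_nat_absorptionRate_mul_sub_le hα hα1 hγ d (Fintype.card W)
  obtain ⟨J, hJI, rfl⟩ : ∃ J ⊆ I, #J = k := exists_subset_card_eq (by exact_mod_cast k_le.trans hI)
  have target_large : ∀ i ∈ J, ∀ x ∈ F i,
      α / 2 * Fintype.card W + (#J * d : ℕ) ≤ #(A i x) := fun i hi x hx ↦ by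
    push_cast
    linarith [hA i (hJI hi) x hx]
  calc ({φ : V ↪ W | (#(hits I F A φ) : ℝ) < absorptionRate α γ d * Fintype.card W}.ncard : ℝ)
      ≤ {φ : V ↪ W | (#(hits J F A φ) : ℝ) < absorptionRate α γ d * Fintype.card W}.ncard :=
        Nat.cast_le.2 <| Set.ncard_le_ncard <| Set.ofPred_subset_ofPred.2 fun φ hφ ↦
          (Nat.cast_le.2 (card_le_card (hits_mono hJI F A φ))).trans_lt hφ
    _ ≤ Real.exp (absorptionRate α γ d * Fintype.card W - (α / 2) ^ d / 2 * #J) *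
          Nat.card (V ↪ W) :=
        ncard_card_hits_lt_le (by linarith) (by linarith) (fun i hi ↦ hd i (hJI hi))
          (hF.subset hJI) target_large _
    _ ≤ Real.exp (1 - absorptionRate α γ d * Fintype.card W) * Nat.card (V ↪ W) := by gcongr

end Hits

section Stars

open Finset

variable {V W : Type*}

/-- The vertex set `{v} ∪ N⁺(v) ∪ N⁻(v)` of the star of `v` in the digraph `T`. -/
def starSupport (T : V → V → Prop) (v : V) : Set V :=
  {v} ∪ {u | T v u} ∪ {u | T u v}

lemma ncard_starSupport_le (T : V → V → Prop) (v : V) :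
    (starSupport T v).ncard ≤ {u | T v u}.ncard + {u | T u v}.ncard + 1 := by
  have h_in := Set.ncard_union_le ({v} ∪ {u | T v u}) {u | T u v}
  have h_out := Set.ncard_union_le {v} {u | T v u}
  rw [Set.ncard_singleton] at h_out
  unfold starSupport
  omega

/-- The centres `v ∈ S` whose star in `T` is mapped by `φ` with its centre in `P`, its out-leaves in
`Q` and its in-leaves in `R`. The stars `S_v` that are `(u, *, w)`-absorbing in `D` are those with
`P = N^*(u)`, `Q = N⁺(w)` and `R = N⁻(w)`. -/
def absorbingCentres (T : V → V → Prop) (S : Set V) (P Q R : Set W) (φ : V → W) : Set V :=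
  {v ∈ S | φ v ∈ P ∧ (∀ x, T v x → φ x ∈ Q) ∧ ∀ x, T x v → φ x ∈ R}

variable [Finite V] [Fintype W]

lemma ncard_ncard_absorbingCentres_lt_le {α γ : ℝ} (hα : 0 ≤ α) (hα1 : α ≤ 1) (hγ : 0 ≤ γ) {Δ : ℕ}
    {T : V → V → Prop} (hT : ∀ a b, T a b → ¬ T b a) {S : Set V}
    (hΔ : ∀ v ∈ S, {u | T v u}.ncard + {u | T u v}.ncard ≤ Δ)
    (hS : S.PairwiseDisjoint (starSupport T)) (hγS : γ * Fintype.card W ≤ S.ncard)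
    {P Q R : Set W} (hP : α * Fintype.card W ≤ P.ncard) (hQ : α * Fintype.card W ≤ Q.ncard)
    (hR : α * Fintype.card W ≤ R.ncard) :
    ({φ : V ↪ W | ((absorbingCentres T S P Q R φ).ncard : ℝ) <
        absorptionRate α γ (Δ + 1) * Fintype.card W}.ncard : ℝ) ≤
      Real.exp (1 - absorptionRate α γ (Δ + 1) * Fintype.card W) * Nat.card (V ↪ W) := by
  classical
  cases nonempty_fintype V
  let F (v : V) : Finset V := (starSupport T v).toFinset
  let A (v x : V) : Finset W := (if x = v then P else if T v x then Q else R).toFinset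
  have hits_subset (φ : V ↪ W) :
      (hits S.toFinset F A φ : Set V) ⊆ absorbingCentres T S P Q R φ := fun v hv ↦ by
    obtain ⟨hvS, hv⟩ := mem_hits.1 hv
    refine ⟨Set.mem_toFinset.1 hvS, ?_, fun x hx ↦ ?_, fun x hx ↦ ?_⟩
    · simpa [A] using hv v (Set.mem_toFinset.2 (.inl (.inl rfl)))
    · have hne : x ≠ v := by rintro rfl; exact hT x x hx hx
      simpa [A, hne, hx] using hv x (Set.mem_toFinset.2 (.inl (.inr hx)))
    · have hne : x ≠ v := by rintro rfl; exact hT x x hx hx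
      simpa [A, hne, hT x v hx] using hv x (Set.mem_toFinset.2 (.inr hx))
  have card_hits_le (φ : V ↪ W) :
      #(hits S.toFinset F A φ) ≤ (absorbingCentres T S P Q R φ).ncard := by
    rw [← Set.ncard_coe_finset]
    exact Set.ncard_le_ncard (hits_subset φ) (Set.toFinite _)
  refine le_trans (Nat.cast_le.2 <| Set.ncard_le_ncard <| Set.ofPred_subset_ofPred.2 fun φ hφ ↦
      (Nat.cast_le.2 (card_hits_le φ)).trans_lt hφ)
    (ncard_card_hits_lt_absorptionRate_le (I := S.toFinset) (F := F) (A := A)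
      hα hα1 hγ (fun v hv ↦ ?_) (fun v hv w hw hvw ↦ ?_) ?_ fun v _ x _ ↦ ?_)
  · rw [← Set.ncard_eq_toFinset_card']
    exact (ncard_starSupport_le T v).trans (Nat.succ_le_succ (hΔ v (Set.mem_toFinset.1 hv)))
  · exact Set.disjoint_toFinset.2 (hS (by simpa using hv) (by simpa using hw) hvw)
  · rwa [← Set.ncard_eq_toFinset_card']
  · rw [← Set.ncard_eq_toFinset_card']
    split_ifs <;> assumption

lemma one_sub_mul_card_le_card_absorbing {α γ : ℝ} (hα : 0 ≤ α) (hα1 : α ≤ 1) (hγ : 0 ≤ γ) {Δ : ℕ}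
    {T : V → V → Prop} (hT : ∀ a b, T a b → ¬ T b a) {S : Set V}
    (hΔ : ∀ v ∈ S, {u | T v u}.ncard + {u | T u v}.ncard ≤ Δ)
    (hS : S.PairwiseDisjoint (starSupport T)) (hγS : γ * Fintype.card W ≤ S.ncard)
    {D : W → W → Prop} (hD : ∀ v, α * Fintype.card W ≤ {x | D v x}.ncard ∧
      α * Fintype.card W ≤ {x | D x v}.ncard) :
    (1 - 2 * (Fintype.card W : ℝ) ^ 2 *
        Real.exp (1 - absorptionRate α γ (Δ + 1) * Fintype.card W)) * Nat.card (V ↪ W) ≤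
      Nat.card {φ : V ↪ W // ∀ u w : W,
        absorptionRate α γ (Δ + 1) * Fintype.card W ≤
          (absorbingCentres T S {x | D u x} {x | D w x} {x | D x w} φ).ncard ∧
        absorptionRate α γ (Δ + 1) * Fintype.card W ≤
          (absorbingCentres T S {x | D x u} {x | D w x} {x | D x w} φ).ncard} := by
  let N (b : Bool) (u : W) : Set W := if b then {x | D u x} else {x | D x u}
  have hN (b : Bool) (u : W) : α * Fintype.card W ≤ (N b u).ncard := by
    cases b
    exacts [(hD u).2, (hD u).1]
  have union_bound := one_sub_card_mul_mul_card_le_card_forall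
    (P := fun (j : W × W × Bool) (φ : V ↪ W) ↦ absorptionRate α γ (Δ + 1) * Fintype.card W ≤
      (absorbingCentres T S (N j.2.2 j.1) {x | D j.2.1 x} {x | D x j.2.1} φ).ncard)
    fun j ↦ by
      simpa only [not_le] using ncard_ncard_absorbingCentres_lt_le hα hα1 hγ hT hΔ hS hγS
        (hN j.2.2 j.1) (hD j.2.1).1 (hD j.2.1).2
  convert union_bound using 3
  · simp only [Fintype.card_prod, Fintype.card_bool]
    push_cast
    ring
  · simp [N, Prod.forall, and_comm]

end Stars

theorem stmt_11_general {α γ : ℝ} (hα : 0 < α) (hα1 : α ≤ 1) (hγ : 0 < γ) (Δ : ℕ) :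
    ∃ c₁ : ℝ, 0 < c₁ ∧ ∀ ε : ℝ, 0 < ε → ∃ n₀ : ℕ, ∀ n : ℕ, n₀ ≤ n →
    ∀ (VT : Type*) (VD : Type*) [Fintype VT] [Fintype VD],
    ∀ T : VT → VT → Prop, (∀ a b, T a b → ¬ T b a) →
    ∀ Vs : Set VT, (∀ v ∈ Vs, {u | T v u}.ncard + {u | T u v}.ncard ≤ Δ) →
      γ * n ≤ Vs.ncard → Vs.PairwiseDisjoint (starSupport T) →
    Fintype.card VD = n →
    ∀ D : VD → VD → Prop,
      (∀ v : VD, α * n ≤ ({x | D v x}.ncard : ℝ) ∧ α * n ≤ ({x | D x v}.ncard : ℝ)) →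
    (1 - ε) * (Nat.card (VT ↪ VD) : ℝ) ≤
      (Nat.card {φ : VT ↪ VD // ∀ u w : VD,
        c₁ * n ≤ (absorbingCentres T Vs {x | D u x} {x | D w x} {x | D x w} φ).ncard ∧
        c₁ * n ≤ (absorbingCentres T Vs {x | D x u} {x | D w x} {x | D x w} φ).ncard} : ℝ) := by
  have rate_pos : 0 < absorptionRate α γ (Δ + 1) := absorptionRate_pos hα hγ Δ.succ_pos
  refine ⟨absorptionRate α γ (Δ + 1), rate_pos, fun ε hε ↦ ?_⟩
  obtain ⟨n₀, hn₀⟩ := Filter.eventually_atTop.1 <|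
    (tendsto_pow_mul_exp_sub_mul_atTop_nhds_zero 2 1 rate_pos).eventually_lt_const (half_pos hε)
  refine ⟨n₀, ?_⟩
  rintro _ hn VT VD _ _ T hT Vs hΔ hVs hdisj rfl D hD
  refine le_trans ?_ (one_sub_mul_card_le_card_absorbing hα.le hα1 hγ.le hT hΔ hdisj hVs hD)
  gcongr
  linarith [hn₀ _ hn]

/-- For a uniformly random injection `φ` of the vertices of an almost spanning bounded-degree
oriented tree `T'` into an `n`-vertex digraph `D` of minimum semidegree at least `αn`, with high
probability every pair `(u, w)` of vertices of `D` and every direction admits at least `c₁n`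
absorbing stars among a fixed family of `γn` vertex-disjoint stars of `T'`. -/
theorem stmt_11 (α γ : ℝ) (hα : 0 < α ∧ α ≤ 1) (hγ : 0 < γ ∧ γ ≤ 1) (Δ : ℕ) :
    ∃ c₁ : ℝ, 0 < c₁ ∧ ∀ ε : ℝ, 0 < ε → ∃ n₀ : ℕ, ∀ n : ℕ, n₀ ≤ n →
    ∀ (VT VD : Type) [Fintype VT] [Fintype VD],
    ∀ n' : ℕ, Fintype.card VT = n' → n ≤ 2 * n' → n' ≤ n →
    ∀ T : VT → VT → Prop, (∀ a, ¬ T a a) → (∀ a b, T a b → ¬ T b a) →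
      (SimpleGraph.fromRel T).IsTree →
      (∀ v : VT, {u | T v u}.ncard + {u | T u v}.ncard ≤ Δ) →
    ∀ Vs : Set VT, (Vs.ncard : ℝ) = γ * n →
      (Vs.Pairwise fun v w =>
        Disjoint ({v} ∪ {u | T v u} ∪ {u | T u v})
                 ({w} ∪ {u | T w u} ∪ {u | T u w})) →
    Fintype.card VD = n →
    ∀ D : VD → VD → Prop,
      (∀ v : VD, α * n ≤ ({x | D v x}.ncard : ℝ) ∧ α * n ≤ ({x | D x v}.ncard : ℝ)) →
    (1 - ε) * (Nat.card (VT ↪ VD) : ℝ) ≤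
      (Nat.card {φ : VT ↪ VD // ∀ u w : VD,
        (c₁ * n ≤ ({v ∈ Vs | D u (φ v) ∧ (∀ x, T v x → D w (φ x)) ∧
            (∀ x, T x v → D (φ x) w)}.ncard : ℝ)) ∧
        (c₁ * n ≤ ({v ∈ Vs | D (φ v) u ∧ (∀ x, T v x → D w (φ x)) ∧
            (∀ x, T x v → D (φ x) w)}.ncard : ℝ))} : ℝ) := by
  obtain ⟨c₁, c₁_pos, h⟩ := stmt_11_general hα.1 hα.2 hγ.1 Δ
  refine ⟨c₁, c₁_pos, fun ε hε ↦ (h ε hε).imp fun n₀ hn₀ n hn VT VD _ _ _ _ _ _ T _ hT _ hΔ Vs hVs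
    hdisj hVD D hD ↦ hn₀ n hn VT VD T hT Vs (fun v _ ↦ hΔ v) hVs.ge hdisj hVD D hD⟩
end

section
/- For each 0 < α < 1 and Δ ∈ ℕ, there exists a constant c = c(α, Δ) such that the following holds: if D_α is an n-vertex digraph with minimum semidegree at least αn, R ∼ D(n, c/n) is a binomial random digraph on the same vertex set, and T is an n-vertex oriented tree with maximum total degree at most Δ, then with probability tending to 1 as n → ∞, T is a subgraph of D_α ∪ R. -/
open MeasureTheory

/-!
Split the random digraph into `4 (Δ + 1)` independent rounds, so that every ordered pair of vertices
can be queried that many times, and embed the tree vertex by vertex in breadth-first order, each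
time querying whether the image of the parent has a random edge to one of many unused vertices.
Breadth-first order guarantees that these queries have not been made before; each of them fails with
a small constant probability, so it suffices to survive linearly many failures.

For a triple `(d, x, v)`, call an embedded tree vertex `s` a witness if moving `s` to `v` keeps its
tree edges inside the dense digraph, and the old image of `s` is a `d`-neighbour of `x` there. While
the first `m ≈ αn / 2` vertices are placed, a pessimistic estimator for the sum of
`2 ^ (-number of witnesses)` over all triples is kept small: by Markov's inequality many unused
vertices hardly increase it, and they are the ones queried; after a failed query, a neighbour in the
dense digraph at most doubles it. So every triple ends up with linearly many witnesses, unless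
linearly many queries failed.

The remaining vertices are placed by the same kind of query. When the query for a neighbour of `x`
fails, an unused `v` takes the place of a witness `s`, whose old image is given to the new vertex.
-/

section BernoulliExpectation

open Finset

variable {J : Type*} [DecidableEq J] {r : J → ℝ}

/-- The probability that a random set which contains each `e` independently with probability
`r e` meets `A` in `A ∩ R`. -/
def bernoulliWeight (r : J → ℝ) (A R : Finset J) : ℝ :=
  ∏ e ∈ A, if e ∈ R then r e else 1 - r e

theorem bernoulliWeight_nonneg (hr : ∀ e, r e ∈ Set.Icc 0 1) (A R : Finset J) :
    0 ≤ bernoulliWeight r A R :=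
  prod_nonneg fun e _ => by split_ifs <;> linarith [(hr e).1, (hr e).2]

variable [Fintype J] {F : Finset J → ℝ}

/-- The expectation of `F (R ∪ K)` for a random set `R` which contains each `e : J`
independently with probability `r e`; `K` is the set of elements already revealed to be present. -/
noncomputable def bernoulliExp (r : J → ℝ) (F : Finset J → ℝ) (K : Finset J) : ℝ :=
  ∑ R, bernoulliWeight r univ R * F (R ∪ K)

theorem sum_bernoulliWeight (r : J → ℝ) : ∑ R, bernoulliWeight r univ R = 1 := by
  have h := Fintype.prod_add r (fun e => 1 - r e)
  rw [prod_congr rfl fun e _ => add_sub_cancel (r e) 1, prod_const_one] at h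
  refine Eq.trans ?_ h.symm
  refine sum_congr rfl fun R _ => ?_
  rw [bernoulliWeight, prod_ite, filter_mem_eq_inter, univ_inter, filter_notMem_eq_sdiff,
    compl_eq_univ_sdiff]

theorem bernoulliExp_eq_sum_erase (r : J → ℝ) (F : Finset J → ℝ) (K : Finset J) (e : J) :
    bernoulliExp r F K = ∑ R ∈ (univ.erase e).powerset, bernoulliWeight r (univ.erase e) R *
      (r e * F (insert e (R ∪ K)) + (1 - r e) * F (R ∪ K)) := by
  have hsplit : (univ : Finset (Finset J)) = (insert e (univ.erase e)).powerset := by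
    rw [insert_erase (mem_univ e), powerset_univ]
  rw [bernoulliExp, hsplit, sum_powerset_insert (notMem_erase e univ), ← sum_add_distrib]
  refine sum_congr rfl fun R hR => ?_
  have he : e ∉ R := fun h => notMem_erase e univ (mem_powerset.1 hR h)
  have hweight :
      bernoulliWeight r (univ.erase e) (insert e R) = bernoulliWeight r (univ.erase e) R :=
    prod_congr rfl fun x hx => by simp only [mem_insert, ne_of_mem_erase hx, false_or]
  have hsplit_weight : ∀ R, bernoulliWeight r univ R =
      (if e ∈ R then r e else 1 - r e) * bernoulliWeight r (univ.erase e) R := fun R =>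
    (mul_prod_erase univ _ (mem_univ e)).symm
  rw [hsplit_weight R, hsplit_weight (insert e R), hweight, if_neg he,
    if_pos (mem_insert_self e R), insert_union]
  ring

theorem bernoulliExp_le_of_le {a : ℝ} {K : Finset J} (hr : ∀ e, r e ∈ Set.Icc 0 1)
    (hF : ∀ R, F (R ∪ K) ≤ a) : bernoulliExp r F K ≤ a :=
  calc bernoulliExp r F K
      ≤ ∑ R, bernoulliWeight r univ R * a :=
        sum_le_sum fun R _ => mul_le_mul_of_nonneg_left (hF R) (bernoulliWeight_nonneg hr _ R)
    _ = a := by rw [← sum_mul, sum_bernoulliWeight, one_mul]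

theorem bernoulliExp_anti (hr : ∀ e, r e ∈ Set.Icc 0 1) (hF : Antitone F) :
    Antitone (bernoulliExp r F) := fun _ _ hK =>
  sum_le_sum fun R _ => mul_le_mul_of_nonneg_left (hF (union_subset_union_right hK))
    (bernoulliWeight_nonneg hr _ R)

/-- Revealing `e` with probability `p` and keeping `r e` for later makes `e` present with
probability `r e + p - r e * p ≤ r e + p`. -/
theorem bernoulliExp_update_add_le {p : ℝ} (hr : ∀ e, r e ∈ Set.Icc 0 1) (hp : 0 ≤ p)
    (hF : Antitone F) (K : Finset J) (e : J) :
    bernoulliExp (Function.update r e (r e + p)) F K ≤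
      p * bernoulliExp r F (insert e K) + (1 - p) * bernoulliExp r F K := by
  simp only [bernoulliExp_eq_sum_erase _ _ _ e, mul_sum, ← sum_add_distrib]
  refine sum_le_sum fun R _ => ?_
  have hweight : bernoulliWeight (Function.update r e (r e + p)) (univ.erase e) R =
      bernoulliWeight r (univ.erase e) R :=
    prod_congr rfl fun x hx => by rw [Function.update_of_ne (ne_of_mem_erase hx)]
  rw [hweight, Function.update_self, union_insert, insert_idem]
  have hFe : F (insert e (R ∪ K)) ≤ F (R ∪ K) := hF (subset_insert _ _)
  have hgain := mul_nonneg (bernoulliWeight_nonneg hr (univ.erase e) R)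
    (mul_nonneg (mul_nonneg (hr e).1 hp) (sub_nonneg.2 hFe))
  linarith

end BernoulliExpectation

section Rounds

open Finset

variable {J L : Type*} [DecidableEq J] [Fintype L] [DecidableEq L]
  {p : ℝ} {F : Finset J → ℝ} {Q C : Finset (J × L)} {K : Finset J}

/-- The random set is exposed in rounds: every `e : J` has a cell `(e, l)` for each round `l : L`,
which succeeds with probability `p`. After the cells in `Q` have been queried, `residualProb p Q e`
is the union bound for the probability that a remaining cell of `e` succeeds. -/
def residualProb (p : ℝ) (Q : Finset (J × L)) (e : J) : ℝ :=
  p * #{l | (e, l) ∉ Q}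

theorem residualProb_mem_Icc (hp : 0 ≤ p) (hpL : p * Fintype.card L ≤ 1) (Q : Finset (J × L))
    (e : J) : residualProb p Q e ∈ Set.Icc 0 1 := by
  constructor
  · unfold residualProb
    positivity
  · refine le_trans ?_ hpL
    unfold residualProb
    gcongr
    exact card_le_univ _

theorem residualProb_eq_update_insert (p : ℝ) {c : J × L} (hc : c ∉ Q) :
    residualProb p Q =
      Function.update (residualProb p (insert c Q)) c.1 (residualProb p (insert c Q) c.1 + p) := by
  obtain ⟨e, l⟩ := c
  ext x
  obtain rfl | hx := eq_or_ne x e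
  · have hcells : (univ.filter fun i => (x, i) ∉ Q) =
        insert l (univ.filter fun i => (x, i) ∉ insert (x, l) Q) := by
      ext i
      by_cases hi : i = l
      · simp only [hi, mem_filter_univ, hc, not_false_eq_true, mem_insert_self]
      · simp [hi]
    rw [Function.update_self, residualProb, residualProb, hcells, card_insert_of_notMem (by simp)]
    push_cast
    ring
  · simp [residualProb, hx]

/-- The conditional expectation of `F` when the cells in `Q` have been queried, with `K` the set
of elements found. -/
noncomputable def roundExp [Fintype J] (p : ℝ) (F : Finset J → ℝ) (Q : Finset (J × L))
    (K : Finset J) : ℝ :=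
  bernoulliExp (residualProb p Q) F K

variable [Fintype J]

theorem roundExp_anti (hp : 0 ≤ p) (hpL : p * Fintype.card L ≤ 1) (hF : Antitone F)
    (Q : Finset (J × L)) : Antitone (roundExp p F Q) :=
  bernoulliExp_anti (residualProb_mem_Icc hp hpL Q) hF

theorem roundExp_le_query (hp : 0 ≤ p) (hpL : p * Fintype.card L ≤ 1) (hF : Antitone F)
    {c : J × L} (hc : c ∉ Q) (K : Finset J) :
    roundExp p F Q K ≤
      p * roundExp p F (insert c Q) (insert c.1 K) + (1 - p) * roundExp p F (insert c Q) K := by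
  rw [roundExp, residualProb_eq_update_insert p hc]
  exact bernoulliExp_update_add_le (residualProb_mem_Icc hp hpL _) hp hF K c.1

theorem roundExp_mono_queried (hp : 0 ≤ p) (hpL : p * Fintype.card L ≤ 1)
    (hF : Antitone F) {Q' : Finset (J × L)} (hQ : Q ⊆ Q') :
    roundExp p F Q K ≤ roundExp p F Q' K := by
  obtain ⟨C, hC, rfl⟩ : ∃ C, Disjoint C Q ∧ C ∪ Q = Q' :=
    ⟨Q' \ Q, sdiff_disjoint, sdiff_union_of_subset hQ⟩
  clear hQ
  induction C using Finset.induction_on with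
  | empty => simp
  | insert c C hcC ih =>
    rw [disjoint_insert_left] at hC
    have hfound := roundExp_anti hp hpL hF (insert c (C ∪ Q)) (subset_insert c.1 K)
    have hquery := roundExp_le_query hp hpL hF (c := c) (Q := C ∪ Q) (by simp [hcC, hC.1]) K
    rw [insert_union]
    linarith [ih hC.2, mul_nonneg hp (sub_nonneg.2 hfound)]

/-- The cells `C` are queried one after the other, until one of them succeeds. -/
theorem roundExp_le_of_query (hp : 0 ≤ p) (hp₁ : p ≤ 1) (hpL : p * Fintype.card L ≤ 1)
    (hF : Antitone F) (hC : Disjoint C Q) {a d : ℝ}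
    (hsucc : ∀ c ∈ C, roundExp p F (C ∪ Q) (insert c.1 K) ≤ a)
    (hfail : roundExp p F (C ∪ Q) K ≤ a + d) :
    roundExp p F Q K ≤ a + (1 - p) ^ #C * d := by
  induction C using Finset.induction_on generalizing Q with
  | empty => simpa using hfail
  | insert c C hcC ih =>
    obtain ⟨hcQ, hCQ⟩ := disjoint_insert_left.1 hC
    have hunion : C ∪ insert c Q = insert c C ∪ Q := by rw [union_insert, insert_union]
    have hrest : roundExp p F (insert c Q) K ≤ a + (1 - p) ^ #C * d :=
      ih (disjoint_insert_right.2 ⟨hcC, hCQ⟩)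
        (fun x hx => hunion ▸ hsucc x (mem_insert_of_mem hx)) (hunion ▸ hfail)
    have hfound : roundExp p F (insert c Q) (insert c.1 K) ≤ a := by
      refine le_trans (roundExp_mono_queried hp hpL hF ?_) (hsucc c (mem_insert_self c C))
      rw [insert_union]
      exact insert_subset_insert c subset_union_right
    have hquery := roundExp_le_query hp hpL hF hcQ K
    rw [card_insert_of_notMem hcC, pow_succ]
    linarith [mul_le_mul_of_nonneg_left hfound hp,
      mul_le_mul_of_nonneg_left hrest (sub_nonneg.2 hp₁)]

end Rounds

section Strategies

open Finset

theorem antitone_indicator_compl_of_isUpperSet {J : Type*} {A : Set (Finset J)}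
    (hA : IsUpperSet A) :
    Antitone (Aᶜ.indicator (1 : Finset J → ℝ)) := fun K K' hK => by
  by_cases h : K ∈ A
  · rw [Set.indicator_of_notMem (not_not_intro (hA hK h))]
    exact Set.indicator_nonneg (fun _ _ => zero_le_one) K
  · rw [Set.indicator_of_mem (Set.mem_compl h)]
    exact Set.indicator_le_self' (fun _ _ => zero_le_one) K'

variable {J L : Type*} [DecidableEq J] [DecidableEq L]

/-- `Reaches k₀ A m b Q K`: there is a strategy leading the found set `K` into `A` with at most
`m` further queries, unless `b` of them fail. A query consists of at least `k₀` cells outside the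
already queried set `Q`; it succeeds at an arbitrary one of its cells, or fails at all of them. -/
inductive Reaches (k₀ : ℕ) (A : Set (Finset J)) : ℕ → ℕ → Finset (J × L) → Finset J → Prop
  | done {m b Q K} (hK : K ∈ A) : Reaches k₀ A m b Q K
  | giveUp {m Q K} : Reaches k₀ A m 0 Q K
  | query {m b Q K} (C : Finset (J × L)) (hcard : k₀ ≤ #C) (hC : Disjoint C Q)
      (hsucc : ∀ c ∈ C, Reaches k₀ A m (b + 1) (C ∪ Q) (insert c.1 K))
      (hfail : Reaches k₀ A m b (C ∪ Q) K) : Reaches k₀ A (m + 1) (b + 1) Q K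

variable {k₀ m b : ℕ} {A : Set (Finset J)}

/-- With failure probability `q` per query, every failure is paid for by a factor `1 / 2`, so that
a query multiplies the bound by at most `1 + q`. -/
theorem Reaches.roundExp_le [Fintype J] [Fintype L] {p : ℝ} (hp : 0 ≤ p) (hp₁ : p ≤ 1)
    (hpL : p * Fintype.card L ≤ 1) (hA : IsUpperSet A) {Q : Finset (J × L)} {K : Finset J}
    (h : Reaches k₀ A m b Q K) :
    roundExp p (Aᶜ.indicator 1) Q K ≤ (1 / 2) ^ b * (1 + (1 - p) ^ k₀) ^ m := by
  have hq : 0 ≤ 1 - p := sub_nonneg.2 hp₁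
  induction h with
  | @done m b Q K hK =>
    refine bernoulliExp_le_of_le (residualProb_mem_Icc hp hpL Q) fun R => ?_
    rw [Set.indicator_of_notMem (not_not_intro (hA subset_union_right hK))]
    positivity
  | @giveUp m Q K =>
    refine bernoulliExp_le_of_le (residualProb_mem_Icc hp hpL Q) fun R => ?_
    rw [pow_zero, one_mul]
    exact (Set.indicator_le_self' (fun _ _ => zero_le_one) _).trans
      (one_le_pow₀ (le_add_of_nonneg_right (pow_nonneg hq _)))
  | @query m b Q K C hcard hC _ _ ihsucc ihfail =>
    set a : ℝ := (1 / 2) ^ (b + 1) * (1 + (1 - p) ^ k₀) ^ m with ha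
    have hfail : roundExp p (Aᶜ.indicator 1) (C ∪ Q) K ≤ a + a := by
      rw [ha, pow_succ]
      linarith [ihfail]
    calc roundExp p (Aᶜ.indicator 1) Q K
        ≤ a + (1 - p) ^ #C * a :=
          roundExp_le_of_query hp hp₁ hpL (antitone_indicator_compl_of_isUpperSet hA) hC
            ihsucc hfail
      _ ≤ a + (1 - p) ^ k₀ * a := by
          gcongr a + ?_ * a
          exact pow_le_pow_of_le_one hq (sub_le_self 1 hp) hcard
      _ = (1 / 2) ^ (b + 1) * (1 + (1 - p) ^ k₀) ^ (m + 1) := by rw [ha]; ring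

end Strategies

section ProductMeasure

open Finset

/-- The law of a biased coin showing `true` with probability `q`. -/
noncomputable def coinMeasure (q : ℝ) : Measure Bool :=
  ENNReal.ofReal q • Measure.dirac true + ENNReal.ofReal (1 - q) • Measure.dirac false

theorem isProbabilityMeasure_coinMeasure {q : ℝ} (hq : q ∈ Set.Icc 0 1) :
    IsProbabilityMeasure (coinMeasure q) :=
  ⟨by simp [coinMeasure, ← ENNReal.ofReal_add hq.1 (sub_nonneg.2 hq.2)]⟩

variable {J : Type*} [Fintype J] [DecidableEq J] {r : J → ℝ}

theorem pi_coinMeasure_singleton (hr : ∀ e, r e ∈ Set.Icc 0 1) (ω : J → Bool) :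
    (Measure.pi fun e => coinMeasure (r e)) {ω} =
      ENNReal.ofReal (bernoulliWeight r univ {e | ω e}) := by
  have := fun e => isProbabilityMeasure_coinMeasure (hr e)
  rw [Measure.pi_singleton, bernoulliWeight, ENNReal.ofReal_prod_of_nonneg]
  · refine prod_congr rfl fun e _ => ?_
    cases h : ω e <;> simp [coinMeasure, h]
  · intro e _
    split_ifs <;> linarith [(hr e).1, (hr e).2]

theorem pi_coinMeasure_compl (hr : ∀ e, r e ∈ Set.Icc 0 1) (A : Set (Finset J)) :
    (Measure.pi fun e => coinMeasure (r e)) {ω | ({e | ω e} : Finset J) ∈ A}ᶜ =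
      ENNReal.ofReal (bernoulliExp r (Aᶜ.indicator 1) ∅) := by
  classical
  have := fun e => isProbabilityMeasure_coinMeasure (hr e)
  set B : Finset (J → Bool) := {ω | ({e | ω e} : Finset J) ∉ A} with hB
  have hcompl : {ω : J → Bool | ({e | ω e} : Finset J) ∈ A}ᶜ = B := by ext; simp [hB]
  rw [hcompl, ← sum_measure_singleton, sum_congr rfl fun ω _ => pi_coinMeasure_singleton hr ω,
    ← ENNReal.ofReal_sum_of_nonneg fun ω _ =>
      bernoulliWeight_nonneg hr univ {e | ω e}]
  congr 1
  rw [hB, sum_filter]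
  refine Fintype.sum_bijective (fun ω : J → Bool => ({e | ω e} : Finset J))
    ⟨fun ω ω' h => ?_, fun R => ⟨fun e => decide (e ∈ R), by ext; simp⟩⟩ _ _ fun ω => ?_
  · ext e
    simpa [← Bool.eq_iff_iff] using Finset.ext_iff.1 h e
  · by_cases hω : ({e | ω e} : Finset J) ∈ A <;> simp [hω]

theorem Reaches.le_pi_coinMeasure {L : Type*} [Fintype L] [DecidableEq L] {p : ℝ} (hp : 0 ≤ p)
    (hp₁ : p ≤ 1) (hpL : p * Fintype.card L ≤ 1) {A : Set (Finset J)} (hA : IsUpperSet A)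
    {k₀ m b : ℕ} (h : Reaches k₀ A m b (∅ : Finset (J × L)) ∅) :
    1 - ENNReal.ofReal ((1 / 2) ^ b * (1 + (1 - p) ^ k₀) ^ m) ≤
      (Measure.pi fun _ => coinMeasure (p * Fintype.card L))
        {ω | ({e | ω e} : Finset J) ∈ A} := by
  have hr : p * Fintype.card L ∈ Set.Icc (0 : ℝ) 1 := ⟨by positivity, hpL⟩
  have := isProbabilityMeasure_coinMeasure hr
  set μ := Measure.pi fun _ : J => coinMeasure (p * Fintype.card L) with hμ
  set B : Set (J → Bool) := {ω | ({e | ω e} : Finset J) ∈ A}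
  have hunqueried : residualProb p (∅ : Finset (J × L)) = fun _ => p * Fintype.card L := by
    ext
    simp [residualProb]
  have hfail : μ Bᶜ ≤ ENNReal.ofReal ((1 / 2) ^ b * (1 + (1 - p) ^ k₀) ^ m) := by
    rw [hμ, pi_coinMeasure_compl fun _ => hr, ← hunqueried]
    exact ENNReal.ofReal_le_ofReal (h.roundExp_le hp hp₁ hpL hA)
  rw [tsub_le_iff_right, ← measure_univ (μ := μ),
    ← measure_add_measure_compl (Set.toFinite B).measurableSet]
  gcongr

end ProductMeasure

section PessimisticEstimator

open Finset Function

theorem mul_card_le_mul_card_filter_le {V : Type*} {f : V → ℝ} {U : Finset V}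
    {Φ η : ℝ} (hf : ∀ u ∈ U, 0 ≤ f u) (hΦ : 0 < Φ) (hsum : ∑ u ∈ U, f u ≤ #U * Φ) :
    η * #U ≤ (1 + η) * #{u ∈ U | f u ≤ (1 + η) * Φ} := by
  have hbad : #{u ∈ U | ¬ f u ≤ (1 + η) * Φ} * ((1 + η) * Φ) ≤ #U * Φ :=
    calc #{u ∈ U | ¬ f u ≤ (1 + η) * Φ} * ((1 + η) * Φ)
        ≤ ∑ u ∈ U with ¬ f u ≤ (1 + η) * Φ, f u := by
          rw [← nsmul_eq_mul]
          exact card_nsmul_le_sum _ _ _ fun u hu => (not_le.1 (mem_filter.1 hu).2).le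
      _ ≤ ∑ u ∈ U, f u := sum_le_sum_of_subset_of_nonneg (filter_subset _ _) fun u hu _ => hf u hu
      _ ≤ #U * Φ := hsum
  have hcard : (#{u ∈ U | f u ≤ (1 + η) * Φ} + #{u ∈ U | ¬ f u ≤ (1 + η) * Φ} : ℝ) = #U := by
    exact_mod_cast card_filter_add_card_filter_not _
  rw [← mul_assoc, mul_le_mul_iff_left₀ hΦ, ← hcard] at hbad
  rw [← hcard]
  linarith

variable {V : Type*} [DecidableEq V] {κ : ℝ} {S B : Finset ℕ} {block : ℕ → Finset ℕ}
  {k : ℕ} {φ : ℕ → V}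

/-- The probability that `φ i ∈ A i` for all `i ∈ B`, when `φ` is known below `k` and each later
value of `φ` lies in its target set with probability `κ`. -/
noncomputable def hitProb (κ : ℝ) (A : ℕ → Finset V) (k : ℕ) (φ : ℕ → V) (B : Finset ℕ) : ℝ :=
  ∏ i ∈ B, if i < k then (if φ i ∈ A i then 1 else 0) else κ

/-- The expectation of `2 ^ (-h)`, where `h` counts the blocks `block s`, `s ∈ S`, all of whose
elements `i` satisfy `φ i ∈ A s i`, under the random completion of `φ` in `hitProb`. -/
noncomputable def missWeight (κ : ℝ) (S : Finset ℕ) (block : ℕ → Finset ℕ)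
    (A : ℕ → ℕ → Finset V) (k : ℕ) (φ : ℕ → V) : ℝ :=
  ∏ s ∈ S, (1 - hitProb κ (A s) k φ (block s) / 2)

theorem hitProb_mem_Icc (hκ : κ ∈ Set.Icc 0 1) (A : ℕ → Finset V) (k : ℕ) (φ : ℕ → V)
    (B : Finset ℕ) : hitProb κ A k φ B ∈ Set.Icc 0 1 := by
  constructor
  · exact prod_nonneg fun i _ => by split_ifs <;> linarith [hκ.1]
  · exact prod_le_one (fun i _ => by split_ifs <;> linarith [hκ.1])
      fun i _ => by split_ifs <;> linarith [hκ.2]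

theorem hitProb_of_mem (A : ℕ → Finset V) (φ : ℕ → V) (hk : k ∈ B) :
    hitProb κ A k φ B = κ * hitProb κ A k φ (B.erase k) := by
  rw [hitProb, ← mul_prod_erase B _ hk, if_neg (lt_irrefl k), hitProb]

theorem hitProb_update_of_notMem (A : ℕ → Finset V) (φ : ℕ → V) (u : V) (hk : k ∉ B) :
    hitProb κ A (k + 1) (update φ k u) B = hitProb κ A k φ B := by
  refine prod_congr rfl fun i hi => ?_
  have hik : i ≠ k := ne_of_mem_of_not_mem hi hk
  rw [update_of_ne hik, if_congr (Nat.lt_succ_iff_lt_or_eq.trans (or_iff_left hik)) rfl rfl]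

theorem hitProb_update_of_mem (A : ℕ → Finset V) (φ : ℕ → V) (u : V) (hk : k ∈ B) :
    hitProb κ A (k + 1) (update φ k u) B =
      (if u ∈ A k then 1 else 0) * hitProb κ A k φ (B.erase k) := by
  rw [← hitProb_update_of_notMem A φ u (notMem_erase k B), hitProb, ← mul_prod_erase B _ hk,
    if_pos k.lt_succ_self, update_self, hitProb]

variable (A : ℕ → ℕ → Finset V)

theorem missWeight_pos (hκ : κ ∈ Set.Icc 0 1) (S : Finset ℕ) (block : ℕ → Finset ℕ) (k : ℕ)
    (φ : ℕ → V) : 0 < missWeight κ S block A k φ :=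
  prod_pos fun s _ => by linarith [(hitProb_mem_Icc hκ (A s) k φ (block s)).2]

theorem missWeight_of_mem {s : ℕ} (hs : s ∈ S) (hk : k ∈ block s) :
    missWeight κ S block A k φ =
      (1 - κ * hitProb κ (A s) k φ ((block s).erase k) / 2) *
        missWeight κ (S.erase s) block A k φ := by
  rw [missWeight, ← mul_prod_erase S _ hs, hitProb_of_mem _ _ hk, missWeight]

theorem missWeight_update_of_notMem (u : V) (hk : ∀ s ∈ S, k ∉ block s) :
    missWeight κ S block A (k + 1) (update φ k u) = missWeight κ S block A k φ :=
  prod_congr rfl fun s hs => by rw [hitProb_update_of_notMem _ _ _ (hk s hs)]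

theorem missWeight_update_of_mem (hdisj : (S : Set ℕ).PairwiseDisjoint block) (u : V) {s : ℕ}
    (hs : s ∈ S) (hk : k ∈ block s) :
    missWeight κ S block A (k + 1) (update φ k u) =
      (1 - (if u ∈ A s k then 1 else 0) * hitProb κ (A s) k φ ((block s).erase k) / 2) *
        missWeight κ (S.erase s) block A k φ := by
  have hother : ∀ t ∈ S.erase s, k ∉ block t := fun t ht hkt =>
    disjoint_left.1 (hdisj (mem_of_mem_erase ht) hs (ne_of_mem_erase ht)) hkt hk
  rw [← missWeight_update_of_notMem A u hother, missWeight, ← mul_prod_erase S _ hs,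
    hitProb_update_of_mem _ _ _ hk, missWeight]

theorem missWeight_update_le_two_mul (hκ : κ ∈ Set.Icc 0 1)
    (hdisj : (S : Set ℕ).PairwiseDisjoint block) (u : V) :
    missWeight κ S block A (k + 1) (update φ k u) ≤ 2 * missWeight κ S block A k φ := by
  by_cases h : ∃ s ∈ S, k ∈ block s
  · obtain ⟨s, hs, hk⟩ := h
    rw [missWeight_update_of_mem A hdisj u hs hk, missWeight_of_mem A hs hk, ← mul_assoc]
    have hrest := missWeight_pos A hκ (S.erase s) block k φ
    obtain ⟨h0, h1⟩ := hitProb_mem_Icc hκ (A s) k φ ((block s).erase k)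
    gcongr
    split_ifs <;> linarith [mul_le_one₀ hκ.2 h0 h1]
  · push Not at h
    rw [missWeight_update_of_notMem A u h]
    linarith [missWeight_pos A hκ S block k φ]

theorem sum_missWeight_update_le (hκ : κ ∈ Set.Icc 0 1)
    (hdisj : (S : Set ℕ).PairwiseDisjoint block) {U : Finset V}
    (hU : ∀ s, κ * #U ≤ #{u ∈ U | u ∈ A s k}) :
    ∑ u ∈ U, missWeight κ S block A (k + 1) (update φ k u) ≤
      #U * missWeight κ S block A k φ := by
  by_cases h : ∃ s ∈ S, k ∈ block s
  · obtain ⟨s, hs, hk⟩ := h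
    simp only [missWeight_update_of_mem A hdisj _ hs hk, missWeight_of_mem A hs hk]
    have hrest := missWeight_pos A hκ (S.erase s) block k φ
    have h0 := (hitProb_mem_Icc hκ (A s) k φ ((block s).erase k)).1
    rw [← sum_mul, ← mul_assoc, sum_sub_distrib, ← sum_div, ← sum_mul, sum_boole, sum_const,
      nsmul_eq_mul]
    gcongr
    linarith [mul_le_mul_of_nonneg_right (hU s) h0]
  · push Not at h
    rw [sum_congr rfl fun u _ => missWeight_update_of_notMem A u h, sum_const, nsmul_eq_mul]

theorem missWeight_zero_le (hκ : κ ∈ Set.Icc 0 1) {D : ℕ} (hD : ∀ s ∈ S, #(block s) ≤ D) :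
    missWeight κ S block A 0 φ ≤ (1 - κ ^ D / 2) ^ #S := by
  have hfactor : ∀ s ∈ S, 1 - hitProb κ (A s) 0 φ (block s) / 2 ≤ 1 - κ ^ D / 2 := fun s hs => by
    simp only [hitProb, Nat.not_lt_zero, if_false, prod_const]
    linarith [pow_le_pow_of_le_one hκ.1 hκ.2 (hD s hs)]
  exact (prod_le_prod (fun s _ => by linarith [(hitProb_mem_Icc hκ (A s) 0 φ (block s)).2])
    hfactor).trans_eq (prod_const _)

theorem missWeight_of_block_lt (hk : ∀ s ∈ S, ∀ i ∈ block s, i < k) :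
    missWeight κ S block A k φ = (1 / 2) ^ #{s ∈ S | ∀ i ∈ block s, φ i ∈ A s i} := by
  rw [← prod_const, prod_filter]
  refine prod_congr rfl fun s hs => ?_
  have hhit : hitProb κ (A s) k φ (block s) = ∏ i ∈ block s, if φ i ∈ A s i then 1 else 0 :=
    prod_congr rfl fun i hi => if_pos (hk s hs i hi)
  rw [hhit, prod_boole]
  split_ifs <;> norm_num

/-- The pessimistic estimator which keeps the weights `missWeight` of several families `A τ` of
target sets small at the same time. -/
noncomputable def potential {T : Type*} [Fintype T] (κ : ℝ) (S : Finset ℕ)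
    (block : ℕ → Finset ℕ) (A : T → ℕ → ℕ → Finset V) (k : ℕ) (φ : ℕ → V) : ℝ :=
  ∑ τ, missWeight κ S block (A τ) k φ

variable {T : Type*} [Fintype T] (A : T → ℕ → ℕ → Finset V)

theorem potential_pos [Nonempty T] (hκ : κ ∈ Set.Icc 0 1) (S : Finset ℕ) (block : ℕ → Finset ℕ)
    (k : ℕ) (φ : ℕ → V) : 0 < potential κ S block A k φ :=
  sum_pos (fun τ _ => missWeight_pos (A τ) hκ S block k φ) univ_nonempty

theorem potential_update_le_two_mul (hκ : κ ∈ Set.Icc 0 1)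
    (hdisj : (S : Set ℕ).PairwiseDisjoint block) (u : V) :
    potential κ S block A (k + 1) (update φ k u) ≤ 2 * potential κ S block A k φ := by
  rw [potential, potential, mul_sum]
  exact sum_le_sum fun τ _ => missWeight_update_le_two_mul (A τ) hκ hdisj u

theorem sum_potential_update_le (hκ : κ ∈ Set.Icc 0 1)
    (hdisj : (S : Set ℕ).PairwiseDisjoint block) {U : Finset V}
    (hU : ∀ τ s, κ * #U ≤ #{u ∈ U | u ∈ A τ s k}) :
    ∑ u ∈ U, potential κ S block A (k + 1) (update φ k u) ≤
      #U * potential κ S block A k φ := by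
  simp only [potential, mul_sum]
  rw [sum_comm]
  exact sum_le_sum fun τ _ => sum_missWeight_update_le (A τ) hκ hdisj (hU τ)

theorem potential_zero_le (hκ : κ ∈ Set.Icc 0 1) {D : ℕ} (hD : ∀ s ∈ S, #(block s) ≤ D) :
    potential κ S block A 0 φ ≤ Fintype.card T * (1 - κ ^ D / 2) ^ #S := by
  rw [← nsmul_eq_mul]
  exact sum_le_card_nsmul _ _ _ fun τ _ => missWeight_zero_le (A τ) hκ hD

theorem le_card_hit_of_potential_le (hκ : κ ∈ Set.Icc 0 1)
    (hk : ∀ s ∈ S, ∀ i ∈ block s, i < k) {h : ℕ}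
    (hpot : potential κ S block A k φ ≤ (1 / 2) ^ h) (τ : T) :
    h ≤ #{s ∈ S | ∀ i ∈ block s, φ i ∈ A τ s i} := by
  rw [← pow_le_pow_iff_right_of_lt_one₀ (a := (1 / 2 : ℝ)) (by norm_num) (by norm_num),
    ← missWeight_of_block_lt (A τ) hk]
  exact (single_le_sum (fun τ' _ => (missWeight_pos (A τ') hκ S block k φ).le)
    (mem_univ τ)).trans hpot

end PessimisticEstimator

section OrderedTrees

open Finset Function

theorem exists_maximal_pairwiseDisjoint {ι β : Type*} (I : Finset ι) (f : ι → Finset β)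
    (hf : ∀ i ∈ I, (f i).Nonempty) :
    ∃ S ⊆ I, (S : Set ι).PairwiseDisjoint f ∧ ∀ i ∈ I, ∃ s ∈ S, ¬ Disjoint (f i) (f s) := by
  classical
  obtain ⟨u, huI, hdisj, hmeets⟩ := Vitali.exists_disjoint_subfamily_covering_enlargement
    (fun i => (f i : Set β)) I (fun _ => 0) 2 one_lt_two (fun _ _ => le_rfl) 0
    (fun _ _ => le_rfl) (fun i hi => coe_nonempty.2 (hf i hi))
  lift u to Finset ι using I.finite_toSet.subset huI
  refine ⟨u, coe_subset.1 huI, fun i hi j hj hij => disjoint_coe.1 (hdisj hi hj hij),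
    fun i hi => ?_⟩
  obtain ⟨s, hs, hmeet, -⟩ := hmeets i hi
  exact ⟨s, hs, fun h => hmeet.ne_empty (disjoint_coe.2 h).inter_eq⟩

/-- A tree on `0, …, n - 1` in a breadth-first order: `par i` is the parent of `i`, and `dir i`
tells whether the edge between them is directed towards `i`. The values at `0` and from `n` on are
junk. -/
structure OrderedTree (n : ℕ) where
  par : ℕ → ℕ
  dir : ℕ → Bool
  par_lt : ∀ {i}, 0 < i → i < n → par i < i
  par_mono : MonotoneOn par (Set.Ioo 0 n)

namespace OrderedTree

variable {n : ℕ} (t : OrderedTree n) {m Δ : ℕ} {S : Finset ℕ}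

/-- The children of the vertex `s`. -/
def children (s : ℕ) : Finset ℕ :=
  {i ∈ Ioo 0 n | t.par i = s}

/-- The closed neighbourhood of the nonroot vertex `s`. -/
def star (s : ℕ) : Finset ℕ :=
  insert s (insert (t.par s) (t.children s))

variable {t}

theorem mem_children {s i : ℕ} : i ∈ t.children s ↔ (0 < i ∧ i < n) ∧ t.par i = s := by
  rw [children, mem_filter, mem_Ioo]

theorem mem_star {s i : ℕ} : i ∈ t.star s ↔ i = s ∨ i = t.par s ∨ i ∈ t.children s := by
  rw [star, mem_insert, mem_insert]

theorem card_star_le (hΔ : ∀ s, #(t.children s) ≤ Δ) (s : ℕ) : #(t.star s) ≤ Δ + 2 :=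
  calc #(t.star s) ≤ #(t.children s) + 1 + 1 :=
        (card_insert_le _ _).trans (Nat.add_le_add_right (card_insert_le _ _) 1)
    _ ≤ Δ + 2 := Nat.add_le_add_right (hΔ s) 2

/-- Siblings are consecutive and fewer than `Δ + 1`, so they differ modulo `Δ + 1`. -/
theorem eq_of_par_eq_of_ofNat_eq (hΔ : ∀ s, #(t.children s) ≤ Δ) {i k : ℕ} (hi : 0 < i)
    (hik : i ≤ k) (hk : k < n) (hpar : t.par i = t.par k)
    (hmod : Fin.ofNat (Δ + 1) i = Fin.ofNat (Δ + 1) k) : i = k := by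
  have hsiblings : Icc i k ⊆ t.children (t.par k) := fun j hj => by
    obtain ⟨hij, hjk⟩ := mem_Icc.1 hj
    have hi' : i ∈ Set.Ioo 0 n := ⟨hi, by omega⟩
    have hj' : j ∈ Set.Ioo 0 n := ⟨by omega, by omega⟩
    have hk' : k ∈ Set.Ioo 0 n := ⟨by omega, hk⟩
    exact mem_children.2 ⟨hj',
      (t.par_mono hj' hk' hjk).antisymm (hpar ▸ t.par_mono hi' hj' hij)⟩
  have hcard : k + 1 - i ≤ Δ := by
    rw [← Nat.card_Icc]
    exact (card_le_card hsiblings).trans (hΔ _)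
  have hdvd : Δ + 1 ∣ k - i := (Nat.modEq_iff_dvd' hik).1 (Fin.ext_iff.1 hmod)
  have := Nat.eq_zero_of_dvd_of_lt hdvd (by omega)
  omega

variable (t) in
/-- The vertices in `S` may be re-embedded in a switch: their stars are pairwise disjoint and lie
among the first `m` vertices. -/
structure IsSwitchSet (m : ℕ) (S : Finset ℕ) : Prop where
  pos : ∀ s ∈ S, 0 < s
  star_lt : ∀ s ∈ S, ∀ i ∈ t.star s, i < m
  disjoint : (S : Set ℕ).PairwiseDisjoint t.star

theorem star_lt_of_lt_par (hm : 0 < m) (hmn : m < n) {s i : ℕ} (hs : 0 < s) (hsm : s < t.par m)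
    (hi : i ∈ t.star s) : i < m := by
  have hparm := t.par_lt hm hmn
  obtain rfl | rfl | hi := mem_star.1 hi
  · omega
  · have := t.par_lt hs (by omega)
    omega
  · obtain ⟨hi', rfl⟩ := mem_children.1 hi
    by_contra! hmi
    exact absurd (t.par_mono ⟨hm, hmn⟩ hi' hmi) (not_le.2 hsm)

theorem mem_biUnion_star_of_not_disjoint {s s' : ℕ} (hs : 0 < s) (hsn : s < n)
    (h : ¬ Disjoint (t.star s) (t.star s')) : s ∈ (t.star s').biUnion t.star := by
  obtain ⟨i, hi, hi'⟩ := not_disjoint_iff.1 h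
  refine mem_biUnion.2 ⟨i, hi', mem_star.2 ?_⟩
  obtain rfl | rfl | hi := mem_star.1 hi
  · exact .inl rfl
  · exact .inr (.inr (mem_children.2 ⟨⟨hs, hsn⟩, rfl⟩))
  · exact .inr (.inl (mem_children.1 hi).2.symm)

theorem le_mul_par_add_one (hΔ : ∀ s, #(t.children s) ≤ Δ) (hm : 0 < m) (hmn : m < n) :
    m ≤ (t.par m + 1) * Δ := by
  have hcover : Icc 1 m ⊆ (range (t.par m + 1)).biUnion t.children := fun i hi => by
    obtain ⟨hi, him⟩ := mem_Icc.1 hi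
    have hi' : i ∈ Set.Ioo 0 n := ⟨hi, by omega⟩
    exact mem_biUnion.2 ⟨t.par i, mem_range_succ_iff.2 (t.par_mono hi' ⟨hm, hmn⟩ him),
      mem_children.2 ⟨hi', rfl⟩⟩
  calc m = #(Icc 1 m) := by rw [Nat.card_Icc, Nat.add_sub_cancel]
    _ ≤ _ := (card_le_card hcover).trans (card_biUnion_le_card_mul _ _ Δ fun s _ => hΔ s)
    _ = (t.par m + 1) * Δ := by rw [card_range]

theorem exists_isSwitchSet (hΔ : ∀ s, #(t.children s) ≤ Δ) (hm : 0 < m) (hmn : m < n) :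
    ∃ S, t.IsSwitchSet m S ∧ m ≤ (#S * (Δ + 2) ^ 2 + 2) * Δ := by
  obtain ⟨S, hSsub, hdisj, hmeets⟩ := exists_maximal_pairwiseDisjoint (Ioo 0 (t.par m)) t.star
    fun s _ => ⟨s, mem_star.2 (.inl rfl)⟩
  have hS : ∀ s ∈ S, 0 < s ∧ s < t.par m := fun s hs => mem_Ioo.1 (hSsub hs)
  refine ⟨S, ⟨fun s hs => (hS s hs).1,
    fun s hs i hi => star_lt_of_lt_par hm hmn (hS s hs).1 (hS s hs).2 hi, hdisj⟩, ?_⟩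
  have hparm := t.par_lt hm hmn
  have hcover : Ioo 0 (t.par m) ⊆ S.biUnion fun s => (t.star s).biUnion t.star := fun i hi => by
    obtain ⟨s, hs, hmeet⟩ := hmeets i hi
    obtain ⟨hi, him⟩ := mem_Ioo.1 hi
    exact mem_biUnion.2 ⟨s, hs, mem_biUnion_star_of_not_disjoint hi (by omega) hmeet⟩
  have hcard : t.par m - 1 ≤ #S * (Δ + 2) ^ 2 :=
    calc t.par m - 1 = #(Ioo 0 (t.par m)) := by rw [Nat.card_Ioo, Nat.sub_zero]
      _ ≤ #(S.biUnion fun s => (t.star s).biUnion t.star) := card_le_card hcover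
      _ ≤ #S * (Δ + 2) ^ 2 := card_biUnion_le_card_mul _ _ _ fun s _ =>
          sq (Δ + 2) ▸ (card_biUnion_le_card_mul _ _ _ fun i _ => card_star_le hΔ i).trans
            (Nat.mul_le_mul_right _ (card_star_le hΔ s))
  exact (le_mul_par_add_one hΔ hm hmn).trans (Nat.mul_le_mul_right Δ (by omega))

end OrderedTree

end OrderedTrees

section Embeddings

open Finset Function

variable {V : Type*}

/-- The ordered pair formed by `x` and `y` which points at `y` if `d` is true, and at `x`
otherwise. -/
def arc (d : Bool) (x y : V) : V × V :=
  if d then (x, y) else (y, x)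

theorem arc_not (d : Bool) (x y : V) : arc (!d) x y = arc d y x := by
  cases d <;> rfl

theorem arc_inj {d : Bool} {x y x' y' : V} : arc d x y = arc d x' y' ↔ x = x' ∧ y = y' := by
  cases d <;> simp [arc, and_comm]

theorem injOn_update_Iio_succ {φ : ℕ → V} {k : ℕ} {u : V} (h : Set.InjOn φ (Set.Iio k))
    (hu : ∀ i < k, φ i ≠ u) : Set.InjOn (update φ k u) (Set.Iio (k + 1)) := by
  intro i hi j hj hij
  rw [Set.mem_Iio, Nat.lt_succ_iff_lt_or_eq] at hi hj
  rcases hi with hi | rfl <;> rcases hj with hj | rfl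
  · rw [update_of_ne hi.ne, update_of_ne hj.ne] at hij
    exact h hi hj hij
  · rw [update_of_ne hi.ne, update_self] at hij
    exact absurd hij (hu i hi)
  · rw [update_of_ne hj.ne, update_self] at hij
    exact absurd hij.symm (hu j hj)
  · rfl

variable [Fintype V]

open Classical in
/-- The out-neighbours of `x` in the digraph with edge set `D` if `d` is true, and its
in-neighbours otherwise. -/
noncomputable def nbrs (D : Set (V × V)) (d : Bool) (x : V) : Finset V :=
  {y | arc d x y ∈ D}

theorem mem_nbrs {D : Set (V × V)} {d : Bool} {x y : V} : y ∈ nbrs D d x ↔ arc d x y ∈ D := by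
  simp only [nbrs, mem_filter_univ]

variable [DecidableEq V]

/-- The elements of `V` which are not among `φ 0, …, φ (k - 1)`. -/
def unused (φ : ℕ → V) (k : ℕ) : Finset V :=
  univ \ (range k).image φ

theorem mem_unused {φ : ℕ → V} {k : ℕ} {v : V} : v ∈ unused φ k ↔ ∀ i < k, φ i ≠ v := by
  simp only [unused, mem_sdiff, mem_univ, true_and, mem_image, mem_range, not_exists, not_and]

theorem card_le_card_inter_unused_add (A : Finset V) (φ : ℕ → V) (k : ℕ) :
    #A ≤ #{u ∈ unused φ k | u ∈ A} + k := by
  have hsub : A ⊆ {u ∈ unused φ k | u ∈ A} ∪ (range k).image φ := fun u hu => by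
    by_cases hmem : u ∈ (range k).image φ
    · exact mem_union_right _ hmem
    · exact mem_union_left _ (mem_filter.2 ⟨mem_sdiff.2 ⟨mem_univ u, hmem⟩, hu⟩)
  calc #A ≤ #{u ∈ unused φ k | u ∈ A} + #((range k).image φ) :=
        (card_le_card hsub).trans (card_union_le _ _)
    _ ≤ #{u ∈ unused φ k | u ∈ A} + k :=
        Nat.add_le_add_left (card_image_le.trans_eq (card_range k)) _

theorem card_le_card_unused_add (φ : ℕ → V) (k : ℕ) : Fintype.card V ≤ #(unused φ k) + k := by
  simpa using card_le_card_inter_unused_add univ φ k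

namespace OrderedTree

variable {n : ℕ} (t : OrderedTree n) {D E : Set (V × V)} {k m : ℕ} {φ : ℕ → V} {u v : V}
  {S : Finset ℕ}

/-- `φ` embeds the subtree of `t` on `0, …, k - 1` into the digraph with edge set `E`. -/
structure IsEmbedding {V : Type*} (E : Set (V × V)) (k : ℕ) (φ : ℕ → V) : Prop where
  injOn : Set.InjOn φ (Set.Iio k)
  arc_mem : ∀ i, 0 < i → i < k → arc (t.dir i) (φ (t.par i)) (φ i) ∈ E

variable {t}

theorem IsEmbedding.mono {V : Type*} {D E : Set (V × V)} {φ : ℕ → V} (h : t.IsEmbedding D k φ)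
    (hDE : D ⊆ E) : t.IsEmbedding E k φ :=
  ⟨h.injOn, fun i hi hik => hDE (h.arc_mem i hi hik)⟩

theorem IsEmbedding.update (h : t.IsEmbedding E k φ) (hk : k < n) (hu : u ∈ unused φ k)
    (harc : 0 < k → arc (t.dir k) (φ (t.par k)) u ∈ E) :
    t.IsEmbedding E (k + 1) (update φ k u) := by
  refine ⟨injOn_update_Iio_succ h.injOn (mem_unused.1 hu), fun i hi hik => ?_⟩
  have hpar : t.par i ≠ k := by
    have := t.par_lt hi (by omega)
    omega
  rw [update_of_ne hpar]
  obtain hik | rfl := Nat.lt_succ_iff_lt_or_eq.1 hik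
  · rw [update_of_ne hik.ne]
    exact h.arc_mem i hi hik
  · rw [update_self]
    exact harc hi

variable (t) in
/-- For `τ = (d, x, v)`, the set in which the image of `i ∈ t.star s` should lie, so that `v` may
replace the image of `s`, and the image of `s` is then an available `d`-neighbour of `x`. -/
noncomputable def target (D : Set (V × V)) (τ : Bool × V × V) (s i : ℕ) : Finset V :=
  if i = s then nbrs D τ.1 τ.2.1
  else if i = t.par s then nbrs D (!t.dir s) τ.2.2
  else nbrs D (t.dir i) τ.2.2

variable (t) in
/-- The elements of `S` which can be switched with respect to `τ`, see `OrderedTree.target`. -/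
noncomputable def switches (D : Set (V × V)) (S : Finset ℕ) (φ : ℕ → V) (τ : Bool × V × V) :
    Finset ℕ :=
  {s ∈ S | ∀ i ∈ t.star s, φ i ∈ t.target D τ s i}

theorem exists_target_eq_nbrs {V : Type*} [Fintype V] (D : Set (V × V)) (τ : Bool × V × V)
    (s i : ℕ) : ∃ d x, t.target D τ s i = nbrs D d x := by
  unfold target
  split_ifs <;> exact ⟨_, _, rfl⟩

theorem of_mem_switches {d : Bool} {x : V} {s : ℕ} (hs : 0 < s) (hsn : s < n)
    (h : s ∈ t.switches D S φ (d, x, v)) :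
    arc d x (φ s) ∈ D ∧ arc (t.dir s) (φ (t.par s)) v ∈ D ∧
      ∀ i ∈ t.children s, arc (t.dir i) v (φ i) ∈ D := by
  have hpar := t.par_lt hs hsn
  have htarget := (mem_filter.1 h).2
  refine ⟨?_, ?_, fun i hi => ?_⟩
  · simpa [target, mem_nbrs] using htarget s (mem_star.2 (.inl rfl))
  · simpa [target, mem_nbrs, hpar.ne, arc_not] using htarget _ (mem_star.2 (.inr (.inl rfl)))
  · obtain ⟨⟨hi0, hin⟩, hpari⟩ := mem_children.1 hi
    have hsi := t.par_lt hi0 hin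
    have his : i ≠ s := by omega
    have hip : i ≠ t.par s := by omega
    simpa [target, mem_nbrs, his, hip] using htarget i (mem_star.2 (.inr (.inr hi)))

/-- The map which sends `s` to `v` and `k` to `φ s`, and agrees with `φ` elsewhere. -/
def switch {V : Type*} (φ : ℕ → V) (s k : ℕ) (v : V) : ℕ → V :=
  Function.update φ k v ∘ Equiv.swap s k

theorem switch_left {V : Type*} (φ : ℕ → V) (s k : ℕ) (v : V) : switch φ s k v s = v := by
  rw [switch, comp_apply, Equiv.swap_apply_left, update_self]

theorem switch_right {V : Type*} (φ : ℕ → V) {s k : ℕ} (hsk : s ≠ k) (v : V) :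
    switch φ s k v k = φ s := by
  rw [switch, comp_apply, Equiv.swap_apply_right, update_of_ne hsk]

theorem switch_of_ne {V : Type*} (φ : ℕ → V) {s k i : ℕ} (his : i ≠ s) (hik : i ≠ k) (v : V) :
    switch φ s k v i = φ i := by
  rw [switch, comp_apply, Equiv.swap_apply_of_ne_of_ne his hik, update_of_ne hik]

theorem injOn_switch {s : ℕ} (h : Set.InjOn φ (Set.Iio k)) (hsk : s < k) (hv : v ∈ unused φ k) :
    Set.InjOn (switch φ s k v) (Set.Iio (k + 1)) := by
  refine (injOn_update_Iio_succ h (mem_unused.1 hv)).comp (Equiv.injective _).injOn fun i hi => ?_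
  rw [Set.mem_Iio] at hi ⊢
  rw [Equiv.swap_apply_def]
  split_ifs <;> omega

theorem IsEmbedding.switch {s : ℕ} (h : t.IsEmbedding E k φ) (hDE : D ⊆ E) (hkn : k < n)
    (hs : 0 < s) (hsk : ∀ i ∈ t.star s, i < k) (hv : v ∈ unused φ k)
    (hmem : s ∈ t.switches D S φ (t.dir k, φ (t.par k), v)) :
    t.IsEmbedding E (k + 1) (switch φ s k v) := by
  have hsk' : s < k := hsk s (mem_star.2 (.inl rfl))
  obtain ⟨hk, hpar, hchildren⟩ := of_mem_switches hs (hsk'.trans hkn) hmem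
  refine ⟨injOn_switch h.injOn hsk' hv, fun i hi hik => ?_⟩
  have hpari := t.par_lt hi (by omega)
  by_cases his : t.par i = s
  · have hichild : i ∈ t.children s := mem_children.2 ⟨⟨hi, by omega⟩, his⟩
    have hik' := hsk i (mem_star.2 (.inr (.inr hichild)))
    rw [his, switch_left, switch_of_ne φ (by omega) (by omega)]
    exact hDE (hchildren i hichild)
  · rw [switch_of_ne φ his (by omega)]
    by_cases hieq : i = s
    · rw [hieq, switch_left]
      exact hDE hpar
    obtain hik | rfl := Nat.lt_succ_iff_lt_or_eq.1 hik
    · rw [switch_of_ne φ hieq hik.ne]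
      exact h.arc_mem i hi hik
    · rw [switch_right φ hsk'.ne]
      exact hDE hk

theorem IsSwitchSet.card_switches_le (hS : t.IsSwitchSet m S) (hmk : m ≤ k) {s : ℕ} (hs : s ∈ S)
    (τ : Bool × V × V) :
    #(t.switches D S φ τ) ≤ #(t.switches D S (OrderedTree.switch φ s k v) τ) + 1 := by
  refine (card_le_card fun s' hs' => ?_).trans (card_insert_le s _)
  rw [mem_insert, or_iff_not_imp_left]
  intro hne
  obtain ⟨hs', hmem⟩ := mem_filter.1 hs'
  refine mem_filter.2 ⟨hs', fun i hi => ?_⟩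
  have his : i ≠ s := fun his =>
    disjoint_left.1 (hS.disjoint hs' hs hne) hi (his ▸ mem_star.2 (.inl rfl))
  have := hS.star_lt s' hs' i hi
  rw [switch_of_ne φ his (by omega)]
  exact hmem i hi

/-- Only one switch is lost, because stars of different elements of `S` are disjoint. -/
theorem IsSwitchSet.exists_switch (hS : t.IsSwitchSet m S) (hDE : D ⊆ E) (hmk : m ≤ k)
    (hkn : k < n) (h : t.IsEmbedding E k φ) (hv : v ∈ unused φ k) {c : ℕ}
    (hc : ∀ τ, c + 1 ≤ #(t.switches D S φ τ)) :
    ∃ φ', t.IsEmbedding E (k + 1) φ' ∧ (∀ τ, c ≤ #(t.switches D S φ' τ)) ∧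
      ∀ i, m ≤ i → i ≤ k → φ' (t.par i) = φ (t.par i) := by
  obtain ⟨s, hmem⟩ := card_pos.1 (c.succ_pos.trans_le (hc (t.dir k, φ (t.par k), v)))
  have hs : s ∈ S := (mem_filter.1 hmem).1
  refine ⟨OrderedTree.switch φ s k v, h.switch hDE hkn (hS.pos s hs)
    (fun i hi => (hS.star_lt s hs i hi).trans_le hmk) hv hmem,
    fun τ => Nat.le_of_succ_le_succ ((hc τ).trans (hS.card_switches_le hmk hs τ)),
    fun i hmi hik => ?_⟩
  have hsm := hS.star_lt s hs s (mem_star.2 (.inl rfl))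
  have hpar := t.par_lt (by omega) (hik.trans_lt hkn)
  refine switch_of_ne φ (fun his => ?_) (by omega) v
  have := hS.star_lt s hs i (mem_star.2 (.inr (.inr (mem_children.2 ⟨by omega, his⟩))))
  omega

theorem switches_update_subset (hS : t.IsSwitchSet m S) (hmk : m ≤ k) (τ : Bool × V × V) :
    t.switches D S φ τ ⊆ t.switches D S (Function.update φ k u) τ := fun s hs => by
  obtain ⟨hs, hmem⟩ := mem_filter.1 hs
  refine mem_filter.2 ⟨hs, fun i hi => ?_⟩
  rw [update_of_ne ((hS.star_lt s hs i hi).trans_le hmk).ne]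
  exact hmem i hi

end OrderedTree

end Embeddings

section EmbeddingStrategy

open Finset Function

namespace OrderedTree

variable {V : Type*} [DecidableEq V] {n : ℕ} (t : OrderedTree n) (Δ m : ℕ) {k k₀ : ℕ}
  {φ φ' : ℕ → V} {U : Finset V} {Q : Finset ((V × V) × (Bool × Bool × Fin (Δ + 1)))}

/-- The round of random arcs in which the arc to the vertex `i` is looked for. The second entry
tells the vertices from `m` on apart, since their predecessors may be re-embedded. -/
def round (i : ℕ) : Bool × Bool × Fin (Δ + 1) :=
  (t.dir i, decide (m ≤ i), Fin.ofNat (Δ + 1) i)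

/-- The random arcs which would allow to map `k` into `U`. -/
def row (φ : ℕ → V) (k : ℕ) (U : Finset V) : Finset ((V × V) × (Bool × Bool × Fin (Δ + 1))) :=
  U.image fun u => (arc (t.dir k) (φ (t.par k)) u, t.round Δ m k)

/-- Among the cells `Q` exposed before embedding `k`, those from rounds with second entry `late`
belong to the rows of earlier vertices. -/
def IsFresh (late : Bool) (φ : ℕ → V) (k : ℕ)
    (Q : Finset ((V × V) × (Bool × Bool × Fin (Δ + 1)))) : Prop :=
  ∀ c ∈ Q, c.2.2.1 = late →
    ∃ i, 0 < i ∧ i < k ∧ ∃ y, c = (arc (t.dir i) (φ (t.par i)) y, t.round Δ m i)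

variable {t Δ m}

theorem mem_row {c : (V × V) × (Bool × Bool × Fin (Δ + 1))} :
    c ∈ t.row Δ m φ k U ↔ ∃ u ∈ U, (arc (t.dir k) (φ (t.par k)) u, t.round Δ m k) = c :=
  mem_image

theorem card_row (φ : ℕ → V) (k : ℕ) (U : Finset V) : #(t.row Δ m φ k U) = #U :=
  card_image_of_injective U fun _ _ h => (arc_inj.1 (congrArg Prod.fst h)).2

theorem IsFresh.union_row {late : Bool} (h : t.IsFresh Δ m late φ k Q) (hk : 0 < k)
    (hφ : ∀ i, 0 < i → i ≤ k → decide (m ≤ i) = late → φ' (t.par i) = φ (t.par i)) :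
    t.IsFresh Δ m late φ' (k + 1) (t.row Δ m φ k U ∪ Q) := by
  intro c hc hlate
  rw [mem_union, mem_row] at hc
  obtain ⟨u, -, rfl⟩ | hc := hc
  · exact ⟨k, hk, k.lt_succ_self, u, by rw [hφ k hk le_rfl hlate]⟩
  · obtain ⟨i, hi, hik, y, rfl⟩ := h c hc hlate
    exact ⟨i, hi, hik.trans k.lt_succ_self, y, by rw [hφ i hi hik.le hlate]⟩

theorem IsFresh.union_row_update {late : Bool} (h : t.IsFresh Δ m late φ k Q) (hk : 0 < k)
    (hkn : k < n) (u : V) :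
    t.IsFresh Δ m late (update φ k u) (k + 1) (t.row Δ m φ k U ∪ Q) :=
  h.union_row hk fun _ hi hik _ =>
    update_of_ne ((t.par_lt hi (hik.trans_lt hkn)).trans_le hik).ne _ _

theorem IsFresh.disjoint_row (h : t.IsFresh Δ m (decide (m ≤ k)) φ k Q)
    (hΔ : ∀ s, #(t.children s) ≤ Δ) (hφ : Set.InjOn φ (Set.Iio k)) (hk : 0 < k) (hkn : k < n) :
    Disjoint (t.row Δ m φ k U) Q := by
  refine disjoint_left.2 fun c hc hcQ => ?_
  obtain ⟨u, -, rfl⟩ := mem_row.1 hc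
  obtain ⟨i, hi, hik, y, heq⟩ := h _ hcQ rfl
  simp only [round, Prod.mk.injEq] at heq
  obtain ⟨harc, hdir, -, hmod⟩ := heq
  rw [hdir, arc_inj] at harc
  have hpar : t.par k = t.par i :=
    hφ (t.par_lt hk hkn) ((t.par_lt hi (hik.trans hkn)).trans hik) harc.1
  exact hik.ne (eq_of_par_eq_of_ofNat_eq hΔ hi hik.le hkn hpar.symm hmod.symm)

variable (t) in
/-- The sets of arcs which, added to `D`, yield a digraph containing `t`. -/
def completions {V : Type*} (D : Set (V × V)) : Set (Finset (V × V)) :=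
  {K | ∃ φ : ℕ → V, t.IsEmbedding (D ∪ K) n φ}

theorem isUpperSet_completions {V : Type*} (D : Set (V × V)) : IsUpperSet (t.completions D) :=
  fun _ _ hKK' ⟨φ, hφ⟩ => ⟨φ, hφ.mono (Set.union_subset_union_right D (coe_subset.2 hKK'))⟩

theorem reaches_of_row {A : Set (Finset (V × V))} {j b : ℕ} {K : Finset (V × V)}
    (hΔ : ∀ s, #(t.children s) ≤ Δ) (hφ : Set.InjOn φ (Set.Iio k)) (hk : 0 < k) (hkn : k < n)
    (hfresh : t.IsFresh Δ m (decide (m ≤ k)) φ k Q) (hU : k₀ ≤ #U)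
    (hsucc : ∀ u ∈ U, Reaches k₀ A j (b + 1) (t.row Δ m φ k U ∪ Q)
      (insert (arc (t.dir k) (φ (t.par k)) u) K))
    (hfail : Reaches k₀ A j b (t.row Δ m φ k U ∪ Q) K) : Reaches k₀ A (j + 1) (b + 1) Q K :=
  .query (t.row Δ m φ k U) (hU.trans_eq (card_row φ k U).symm) (hfresh.disjoint_row hΔ hφ hk hkn)
    (fun c hc => by
      obtain ⟨u, hu, rfl⟩ := mem_row.1 hc
      exact hsucc u hu) hfail

variable [Fintype V] {D : Set (V × V)} {S : Finset ℕ} {u v : V}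

theorem IsEmbedding.update_insert {K : Finset (V × V)} (h : t.IsEmbedding (D ∪ K) k φ)
    (hkn : k < n) (hu : u ∈ unused φ k) :
    t.IsEmbedding (D ∪ ↑(insert (arc (t.dir k) (φ (t.par k)) u) K)) (k + 1)
      (Function.update φ k u) :=
  (h.mono (Set.union_subset_union_right D (coe_subset.2 (subset_insert _ K)))).update hkn hu
    fun _ => .inr (mem_insert_self _ K)

theorem unused_nonempty (hn : n ≤ Fintype.card V) (hkn : k < n) (φ : ℕ → V) :
    (unused φ k).Nonempty := by
  have := card_le_card_unused_add φ k
  exact card_pos.1 (by omega)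

theorem IsSwitchSet.exists_isEmbedding (hS : t.IsSwitchSet m S) (hn : n ≤ Fintype.card V)
    {E : Set (V × V)} (hDE : D ⊆ E) (hmk : m ≤ k) (hkn : k ≤ n) (h : t.IsEmbedding E k φ)
    (hc : ∀ τ, n - k ≤ #(t.switches D S φ τ)) : ∃ φ : ℕ → V, t.IsEmbedding E n φ := by
  induction hkn using Nat.decreasingInduction generalizing φ with
  | self => exact ⟨φ, h⟩
  | of_succ k hkn ih =>
    obtain ⟨v, hv⟩ := unused_nonempty hn hkn φ
    obtain ⟨φ', hφ', hc', -⟩ := hS.exists_switch hDE hmk hkn h hv (c := n - (k + 1))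
      fun τ => by have := hc τ; omega
    exact ih (by omega) hφ' hc'

theorem IsSwitchSet.reaches_of_le_card_switches (hS : t.IsSwitchSet m S)
    (hΔ : ∀ s, #(t.children s) ≤ Δ) (hn : n ≤ Fintype.card V) {j b : ℕ} {K : Finset (V × V)}
    (hj : n ≤ k + j) (hk : 0 < k) (hmk : m ≤ k) (hkn : k ≤ n) (h : t.IsEmbedding (D ∪ K) k φ)
    (hfresh : t.IsFresh Δ m true φ k Q) (hc : ∀ τ, b + k₀ ≤ #(t.switches D S φ τ)) :
    Reaches k₀ (t.completions D) j b Q K := by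
  induction j generalizing k b Q K φ with
  | zero => exact .done ⟨φ, (le_antisymm hkn hj) ▸ h⟩
  | succ j ih =>
    obtain rfl | hkn := hkn.eq_or_lt
    · exact .done ⟨φ, h⟩
    obtain _ | b := b
    · exact .giveUp
    have hunused := card_le_card_unused_add φ k
    obtain hfew | hmany := lt_or_ge #(unused φ k) k₀
    · exact .done (hS.exists_isEmbedding hn Set.subset_union_left hmk hkn.le h
        fun τ => by have := hc τ; omega)
    refine reaches_of_row (m := m) hΔ h.injOn hk hkn (by rwa [decide_eq_true hmk]) hmany
      (fun u hu => ?_) ?_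
    · exact ih (by omega) k.succ_pos (by omega) hkn (h.update_insert hkn hu)
        (hfresh.union_row_update hk hkn u)
        fun τ => (hc τ).trans (card_le_card (switches_update_subset hS hmk τ))
    · obtain ⟨v, hv⟩ := unused_nonempty hn hkn φ
      obtain ⟨φ', hφ', hc', hpar⟩ := hS.exists_switch Set.subset_union_left hmk hkn h hv
        (c := b + k₀) fun τ => by have := hc τ; omega
      exact ih (by omega) k.succ_pos (by omega) hkn hφ'
        (hfresh.union_row hk fun i _ hik hmi => hpar i (of_decide_eq_true hmi) hik) hc'

variable {κ η : ℝ}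

theorem mul_card_unused_le
    (hdeg : ∀ d x, κ * Fintype.card V + m ≤ #(nbrs D d x))
    (hκ : 0 ≤ κ) (hkm : k ≤ m) (φ : ℕ → V) (d : Bool) (x : V) :
    κ * #(unused φ k) ≤ #{u ∈ unused φ k | u ∈ nbrs D d x} := by
  have hcard : (#(nbrs D d x) : ℝ) ≤ #{u ∈ unused φ k | u ∈ nbrs D d x} + k := by
    exact_mod_cast card_le_card_inter_unused_add (nbrs D d x) φ k
  have hkm' : (k : ℝ) ≤ m := by exact_mod_cast hkm
  have hunused : κ * #(unused φ k) ≤ κ * Fintype.card V :=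
    mul_le_mul_of_nonneg_left (by exact_mod_cast card_le_univ _) hκ
  linarith [hdeg d x]

theorem exists_mem_unused_inter_nbrs
    (hdeg : ∀ d x, κ * Fintype.card V + m ≤ #(nbrs D d x))
    (hκ : 0 ≤ κ) (hkm : k < m) (φ : ℕ → V) (d : Bool) (x : V) :
    ∃ u ∈ unused φ k, arc d x u ∈ D := by
  have hcard : (#(nbrs D d x) : ℝ) ≤ #{u ∈ unused φ k | u ∈ nbrs D d x} + k := by
    exact_mod_cast card_le_card_inter_unused_add (nbrs D d x) φ k
  have hkm' : (k : ℝ) < m := by exact_mod_cast hkm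
  have hpos : (0 : ℝ) < #{u ∈ unused φ k | u ∈ nbrs D d x} := by
    have : 0 ≤ κ * Fintype.card V := by positivity
    linarith [hdeg d x]
  obtain ⟨u, hu⟩ := card_pos.1 (Nat.cast_pos.1 hpos)
  exact ⟨u, (mem_filter.1 hu).1, mem_nbrs.1 (mem_filter.1 hu).2⟩

theorem IsSwitchSet.sum_potential_update_le
    (hdeg : ∀ d x, κ * Fintype.card V + m ≤ #(nbrs D d x))
    (hS : t.IsSwitchSet m S) (hκ : κ ∈ Set.Icc 0 1)
    (hkm : k ≤ m) (φ : ℕ → V) :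
    ∑ u ∈ unused φ k, potential κ S t.star (t.target D) (k + 1) (update φ k u) ≤
      #(unused φ k) * potential κ S t.star (t.target D) k φ :=
  _root_.sum_potential_update_le _ hκ hS.disjoint fun τ s => by
    obtain ⟨d, x, htarget⟩ := exists_target_eq_nbrs (t := t) D τ s k
    rw [htarget]
    exact mul_card_unused_le hdeg hκ.1 hkm φ d x

variable [Nonempty V]

theorem IsSwitchSet.le_card_filter_potential_le
    (hdeg : ∀ d x, κ * Fintype.card V + m ≤ #(nbrs D d x))
    (hS : t.IsSwitchSet m S) (hκ : κ ∈ Set.Icc 0 1)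
    (hη : 0 ≤ η) (hk₀ : k₀ * (1 + η) ≤ η * (Fintype.card V - m)) (hkm : k ≤ m) (φ : ℕ → V) :
    k₀ ≤ #{u ∈ unused φ k | potential κ S t.star (t.target D) (k + 1) (update φ k u) ≤
      (1 + η) * potential κ S t.star (t.target D) k φ} := by
  have hmarkov := mul_card_le_mul_card_filter_le (η := η)
    (fun u _ => (potential_pos (t.target D) hκ S t.star (k + 1) (update φ k u)).le)
    (potential_pos _ hκ S t.star k φ) (hS.sum_potential_update_le hdeg hκ hkm φ)
  have hunused : (Fintype.card V - m : ℝ) ≤ #(unused φ k) := by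
    have : (Fintype.card V : ℝ) ≤ #(unused φ k) + k := by
      exact_mod_cast card_le_card_unused_add φ k
    have : (k : ℝ) ≤ m := by exact_mod_cast hkm
    linarith
  rw [← Nat.cast_le (α := ℝ), ← mul_le_mul_iff_right₀ (show 0 < 1 + η by positivity)]
  linarith [mul_le_mul_of_nonneg_left hunused hη]

theorem IsSwitchSet.reaches_of_potential_le
    (hdeg : ∀ d x, κ * Fintype.card V + m ≤ #(nbrs D d x))
    (hS : t.IsSwitchSet m S)
    (hΔ : ∀ s, #(t.children s) ≤ Δ) (hn : n ≤ Fintype.card V) (hmn : m ≤ n)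
    (hκ : κ ∈ Set.Icc 0 1) (hη : 0 ≤ η) (hk₀ : k₀ * (1 + η) ≤ η * (Fintype.card V - m))
    {j b : ℕ} {K : Finset (V × V)} (hj : n ≤ k + j) (hk : 0 < k) (hkm : k ≤ m)
    (h : t.IsEmbedding (D ∪ K) k φ) (hfresh : ∀ late, t.IsFresh Δ m late φ k Q)
    (hpot : potential κ S t.star (t.target D) k φ * (1 + η) ^ (m - k) ≤ (1 / 2) ^ (b + k₀)) :
    Reaches k₀ (t.completions D) j b Q K := by
  induction j generalizing k b Q K φ with
  | zero => exact .done ⟨φ, (show k = n by omega) ▸ h⟩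
  | succ j ih =>
    obtain rfl | hkm := hkm.eq_or_lt
    · rw [Nat.sub_self, pow_zero, mul_one] at hpot
      exact hS.reaches_of_le_card_switches hΔ hn hj hk le_rfl hmn h (hfresh true)
        (le_card_hit_of_potential_le _ hκ hS.star_lt hpot)
    obtain _ | b := b
    · exact .giveUp
    have hkn : k < n := hkm.trans_le hmn
    have hpow : (1 + η) ^ (m - k) = (1 + η) * (1 + η) ^ (m - (k + 1)) := by
      rw [← pow_succ']
      congr 1
      omega
    have hnext : 0 < (1 + η) ^ (m - (k + 1)) := by positivity
    rw [hpow] at hpot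
    refine reaches_of_row hΔ h.injOn hk hkn (hfresh _)
      (hS.le_card_filter_potential_le hdeg hκ hη hk₀ hkm.le φ) (fun u hu => ?_) ?_
    · obtain ⟨hu, hpotu⟩ := mem_filter.1 hu
      refine ih (by omega) k.succ_pos hkm (h.update_insert hkn hu)
        (fun late => (hfresh late).union_row_update hk hkn u) ?_
      linarith [mul_le_mul_of_nonneg_right hpotu hnext.le]
    · obtain ⟨u, hu, harc⟩ := exists_mem_unused_inter_nbrs hdeg hκ.1 hkm φ (t.dir k) (φ (t.par k))
      refine ih (by omega) k.succ_pos hkm (h.update hkn hu fun _ => .inl harc)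
        (fun late => (hfresh late).union_row_update hk hkn u) ?_
      have hpotu := potential_update_le_two_mul (t.target D) (k := k) (φ := φ) hκ hS.disjoint u
      have hgrow := le_mul_of_one_le_left (potential_pos (t.target D) hκ S t.star k φ).le
        (le_add_of_nonneg_right hη)
      have := mul_le_mul_of_nonneg_right (hpotu.trans (mul_le_mul_of_nonneg_left hgrow two_pos.le))
        hnext.le
      rw [add_right_comm, pow_succ] at hpot
      linarith

theorem IsSwitchSet.reaches_empty
    (hdeg : ∀ d x, κ * Fintype.card V + m ≤ #(nbrs D d x))
    (hS : t.IsSwitchSet m S)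
    (hΔ : ∀ s, #(t.children s) ≤ Δ) (hn : n ≤ Fintype.card V) (hm : 0 < m) (hmn : m ≤ n)
    (hκ : κ ∈ Set.Icc 0 1) (hη : 0 ≤ η) (hk₀ : k₀ * (1 + η) ≤ η * (Fintype.card V - m)) {b : ℕ}
    (hpot : 2 * Fintype.card V ^ 2 * (1 - κ ^ (Δ + 2) / 2) ^ #S * (1 + η) ^ m ≤
      (1 / 2) ^ (b + k₀)) :
    Reaches k₀ (t.completions D) n b
      (∅ : Finset ((V × V) × (Bool × Bool × Fin (Δ + 1)))) ∅ := by
  obtain ⟨φ₀⟩ : Nonempty (ℕ → V) := inferInstance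
  have havg := hS.sum_potential_update_le hdeg hκ hm.le φ₀
  rw [← nsmul_eq_mul, ← sum_const] at havg
  obtain ⟨u, hu, hpotu⟩ := exists_le_of_sum_le (unused_nonempty hn (hm.trans_le hmn) φ₀) havg
  have hpot₀ := potential_zero_le (φ := φ₀) (t.target D) hκ
    fun s (_ : s ∈ S) => card_star_le hΔ s
  have hcardT : (Fintype.card (Bool × V × V) : ℝ) = 2 * Fintype.card V ^ 2 := by
    rw [Fintype.card_prod, Fintype.card_prod, Fintype.card_bool]
    push_cast
    ring
  have hempty : t.IsEmbedding (D ∪ (∅ : Finset (V × V))) 0 φ₀ :=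
    ⟨fun i hi => absurd hi (Nat.not_lt_zero i), fun i _ hi => absurd hi (Nat.not_lt_zero i)⟩
  refine hS.reaches_of_potential_le hdeg hΔ hn hmn hκ hη hk₀ (Nat.le_add_left n 1) one_pos hm
    (hempty.update (hm.trans_le hmn) hu fun h => absurd h (lt_irrefl 0))
    (fun _ c hc => absurd hc (notMem_empty c)) (le_trans ?_ hpot)
  rw [← hcardT]
  gcongr
  · exact (potential_pos (t.target D) hκ S t.star 1 _).le.trans (hpotu.trans hpot₀)
  · exact hpotu.trans hpot₀
  · linarith
  · exact Nat.sub_le m 1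

end OrderedTree

end EmbeddingStrategy

section BreadthFirstOrder

open Finset Function

variable {U : Type*} {G : SimpleGraph U} {k : ℕ} {f : ℕ → U} {par : ℕ → ℕ}

/-- `f 0, …, f (k - 1)` is an initial segment of a breadth-first order of `G`, in which `f i` is
found as a neighbour of `f (par i)`. -/
structure IsBFSOrder (G : SimpleGraph U) (k : ℕ) (f : ℕ → U) (par : ℕ → ℕ) : Prop where
  injOn : Set.InjOn f (Set.Iio k)
  par_lt : ∀ i ∈ Set.Ioo 0 k, par i < i
  adj : ∀ i ∈ Set.Ioo 0 k, G.Adj (f (par i)) (f i)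
  par_mono : MonotoneOn par (Set.Ioo 0 k)
  explored : ∀ i ∈ Set.Ioo 0 k, ∀ j < par i, ∀ w, G.Adj (f j) w → w ∈ f '' Set.Iio k

theorem monotoneOn_update_Ioo_succ {α : Type*} [Preorder α] {g : ℕ → α} {a : α}
    (hg : MonotoneOn g (Set.Ioo 0 k)) (ha : ∀ i ∈ Set.Ioo 0 k, g i ≤ a) :
    MonotoneOn (update g k a) (Set.Ioo 0 (k + 1)) := by
  intro i hi j hj hij
  obtain hjk | rfl := (Nat.le_of_lt_succ hj.2).lt_or_eq
  · rw [update_of_ne hjk.ne, update_of_ne (hij.trans_lt hjk).ne]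
    exact hg ⟨hi.1, hij.trans_lt hjk⟩ ⟨hj.1, hjk⟩ hij
  · rw [update_self]
    obtain hij | rfl := hij.lt_or_eq
    · rw [update_of_ne hij.ne]
      exact ha i ⟨hi.1, hij⟩
    · rw [update_self]

namespace IsBFSOrder

theorem update (h : IsBFSOrder G k f par) {j : ℕ} {w : U} (hjk : j < k) (hadj : G.Adj (f j) w)
    (hw : w ∉ f '' Set.Iio k) (hmin : ∀ i < j, ∀ w, G.Adj (f i) w → w ∈ f '' Set.Iio k) :
    IsBFSOrder G (k + 1) (update f k w) (update par k j) := by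
  have hIoo : ∀ i ∈ Set.Ioo 0 (k + 1), i ∈ Set.Ioo 0 k ∨ i = k := fun i hi => by
    simp only [Set.mem_Ioo] at hi ⊢
    omega
  have himage : Function.update f k w '' Set.Iio (k + 1) ⊇ f '' Set.Iio k := by
    rintro _ ⟨i, hi, rfl⟩
    exact ⟨i, Set.mem_Iio.2 (Nat.lt_succ_of_lt hi), update_of_ne (ne_of_lt hi) _ _⟩
  have hpark : ∀ i ∈ Set.Ioo 0 k, par i ≤ j := fun i hi => by
    by_contra! hji
    exact hw (h.explored i hi j hji w hadj)
  refine ⟨injOn_update_Iio_succ h.injOn fun i hi hfi => hw ⟨i, hi, hfi⟩, ?_, ?_, ?_, ?_⟩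
  · intro i hi
    obtain hi | rfl := hIoo i hi
    · rw [update_of_ne hi.2.ne]
      exact h.par_lt i hi
    · rwa [update_self]
  · intro i hi
    obtain hi | rfl := hIoo i hi
    · rw [update_of_ne hi.2.ne, update_of_ne hi.2.ne,
        update_of_ne ((h.par_lt i hi).trans hi.2).ne]
      exact h.adj i hi
    · rwa [update_self, update_self, update_of_ne hjk.ne]
  · exact monotoneOn_update_Ioo_succ h.par_mono hpark
  · intro i hi l hl w' hw'
    apply himage
    obtain hi | rfl := hIoo i hi
    · rw [update_of_ne hi.2.ne] at hl
      rw [update_of_ne (hl.trans ((h.par_lt i hi).trans hi.2)).ne] at hw'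
      exact h.explored i hi l hl w' hw'
    · rw [update_self] at hl
      rw [update_of_ne (hl.trans hjk).ne] at hw'
      exact hmin l hl w' hw'

variable [Fintype U]

theorem exists_succ (h : IsBFSOrder G k f par) (hG : G.Connected) (hk : 0 < k)
    (hkU : k < Fintype.card U) : ∃ f par, IsBFSOrder G (k + 1) f par := by
  classical
  obtain ⟨v, hv⟩ : ∃ v, v ∉ (range k).image f := by
    by_contra! hall
    exact hkU.not_ge ((card_le_card fun v _ => hall v).trans
      (card_image_le.trans_eq (card_range k)))
  obtain ⟨p⟩ := hG.preconnected (f 0) v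
  have hboundary : ∃ j, j < k ∧ ∃ w, G.Adj (f j) w ∧ w ∉ f '' Set.Iio k := by
    obtain ⟨⟨⟨_, w⟩, hadj⟩, -, ⟨j, hj, rfl⟩, hw⟩ :=
      p.exists_boundary_dart (f '' Set.Iio k) ⟨0, hk, rfl⟩ (by simpa using hv)
    exact ⟨j, hj, w, hadj, hw⟩
  obtain ⟨hjk, w, hadj, hw⟩ := Nat.find_spec hboundary
  refine ⟨_, _, h.update hjk hadj hw fun i hi w hiw => ?_⟩
  by_contra hw
  exact Nat.find_min hboundary hi ⟨hi.trans hjk, w, hiw, hw⟩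

theorem exists_card (hG : G.Connected) : ∃ f par, IsBFSOrder G (Fintype.card U) f par := by
  obtain ⟨r⟩ := hG.nonempty
  have hone : IsBFSOrder G 1 (fun _ => r) id := by
    refine ⟨fun i hi j hj _ => ?_, fun i hi => ?_, fun i hi => ?_, fun i hi => ?_, fun i hi => ?_⟩
    · simp only [Set.mem_Iio, Nat.lt_one_iff] at hi hj
      rw [hi, hj]
    all_goals
      have := hi.1.trans_le (Nat.le_of_lt_succ hi.2)
      omega
  have hprefix : ∀ k < Fintype.card U, ∃ f par, IsBFSOrder G (k + 1) f par := fun k => by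
    induction k with
    | zero => exact fun _ => ⟨_, _, hone⟩
    | succ k ih => exact fun hk => (ih (by omega)).elim fun f ⟨par, h⟩ =>
        h.exists_succ hG k.succ_pos hk
  have hcard := hprefix _ (Nat.sub_one_lt (Fintype.card_pos_iff.2 ⟨r⟩).ne')
  rwa [Nat.sub_add_cancel (Fintype.card_pos_iff.2 ⟨r⟩)] at hcard

theorem exists_eq (h : IsBFSOrder G (Fintype.card U) f par) (u : U) :
    ∃ i < Fintype.card U, f i = u := by
  have hbij := (Fintype.bijective_iff_injective_and_card fun i : Fin (Fintype.card U) => f i).2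
    ⟨fun i j hij => Fin.ext (h.injOn i.2 j.2 hij), Fintype.card_fin _⟩
  obtain ⟨i, hi⟩ := hbij.2 u
  exact ⟨i, i.2, hi⟩

theorem exists_edge_eq (h : IsBFSOrder G (Fintype.card U) f par) (hG : G.IsTree) {a b : U}
    (hab : G.Adj a b) :
    ∃ i ∈ Set.Ioo 0 (Fintype.card U), s(f (par i), f i) = s(a, b) := by
  classical
  have hinj : Set.InjOn (fun i => s(f (par i), f i)) (Ioo 0 (Fintype.card U) : Finset ℕ) := by
    intro i hi j hj hij
    rw [coe_Ioo] at hi hj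
    obtain ⟨-, hij⟩ | ⟨hij, hji⟩ := Sym2.eq_iff.1 hij
    · exact h.injOn hi.2 hj.2 hij
    · have hpi := h.par_lt i hi
      have hpj := h.par_lt j hj
      have := h.injOn (hpi.trans hi.2) hj.2 hij
      have := h.injOn hi.2 (hpj.trans hj.2) hji
      omega
  have hsub : (Ioo 0 (Fintype.card U)).image (fun i => s(f (par i), f i)) ⊆ G.edgeFinset := by
    intro e he
    obtain ⟨i, hi, rfl⟩ := mem_image.1 he
    exact SimpleGraph.mem_edgeFinset.2 (h.adj i (mem_Ioo.1 hi))
  have heq := eq_of_subset_of_card_le hsub <| by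
    rw [card_image_of_injOn hinj, Nat.card_Ioo, ← hG.card_edgeFinset, Nat.sub_zero,
      Nat.add_sub_cancel]
  have hmem : s(a, b) ∈ G.edgeFinset := SimpleGraph.mem_edgeFinset.2 hab
  rw [← heq] at hmem
  obtain ⟨i, hi, hedge⟩ := mem_image.1 hmem
  exact ⟨i, mem_Ioo.1 hi, hedge⟩

end IsBFSOrder

variable {n : ℕ} {T : U → U → Prop}

open Classical in
/-- The tree `T`, with its vertices numbered in the breadth-first order `f`. -/
noncomputable def IsBFSOrder.orderedTree (h : IsBFSOrder G n f par) (T : U → U → Prop) :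
    OrderedTree n where
  par := par
  dir i := decide (T (f (par i)) (f i))
  par_lt h0 hn := h.par_lt _ ⟨h0, hn⟩
  par_mono := h.par_mono

theorem IsBFSOrder.card_children_orderedTree_le [Finite U]
    (h : IsBFSOrder (SimpleGraph.fromRel T) n f par) (s : ℕ) :
    #((h.orderedTree T).children s) ≤ {u | T (f s) u}.ncard + {u | T u (f s)}.ncard := by
  refine le_trans ?_ (Set.ncard_union_le _ _)
  rw [← Set.ncard_coe_finset]
  refine Set.ncard_le_ncard_of_injOn f (fun i hi => ?_) fun i hi j hj => ?_
  · obtain ⟨hin, rfl⟩ := OrderedTree.mem_children.1 (mem_coe.1 hi)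
    exact (h.adj i hin).2
  · exact h.injOn (OrderedTree.mem_children.1 hi).1.2 (OrderedTree.mem_children.1 hj).1.2

theorem OrderedTree.IsEmbedding.exists_injective_hom [Fintype U] {V : Type*}
    {E : Set (V × V)} {φ : ℕ → V}
    (hT : ∀ a b, T a b → ¬ T b a) (hG : (SimpleGraph.fromRel T).IsTree)
    (h : IsBFSOrder (SimpleGraph.fromRel T) (Fintype.card U) f par)
    (hφ : (h.orderedTree T).IsEmbedding E (Fintype.card U) φ) :
    ∃ ψ : U → V, Injective ψ ∧ ∀ a b, T a b → (ψ a, ψ b) ∈ E := by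
  classical
  choose g hgU hfg using h.exists_eq
  have hgf : ∀ i < Fintype.card U, g (f i) = i := fun i hi => h.injOn (hgU _) hi (hfg _)
  refine ⟨φ ∘ g, fun a b hab => ?_, fun a b hab => ?_⟩
  · rw [← hfg a, ← hfg b, hφ.injOn (hgU a) (hgU b) hab]
  have hne : a ≠ b := fun hab' => hT a b hab (hab' ▸ hab)
  obtain ⟨i, hi, hedge⟩ := h.exists_edge_eq hG (a := a) (b := b) ⟨hne, .inl hab⟩
  have harc := hφ.arc_mem i hi.1 hi.2
  simp only [IsBFSOrder.orderedTree] at harc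
  have hgpar := hgf _ ((h.par_lt i hi).trans hi.2)
  obtain ⟨rfl, rfl⟩ | ⟨rfl, rfl⟩ := Sym2.eq_iff.1 hedge
  · rw [decide_eq_true hab] at harc
    rwa [comp_apply, comp_apply, hgpar, hgf i hi.2]
  · rw [decide_eq_false (hT _ _ hab)] at harc
    rwa [comp_apply, comp_apply, hgpar, hgf i hi.2]

end BreadthFirstOrder

section FiniteBound

open Finset Function

theorem card_nbrs_true {V : Type*} [Fintype V] (D : V → V → Prop) (x : V) :
    #(nbrs {e | D e.1 e.2} true x) = {y | D x y}.ncard := by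
  rw [← Set.ncard_coe_finset]
  congr 1
  ext y
  simp [mem_nbrs, arc]

theorem card_nbrs_false {V : Type*} [Fintype V] (D : V → V → Prop) (x : V) :
    #(nbrs {e | D e.1 e.2} false x) = {y | D y x}.ncard := by
  rw [← Set.ncard_coe_finset]
  congr 1
  ext y
  simp [mem_nbrs, arc]

theorem one_sub_le_pi_coinMeasure_exists_injective_hom {U V : Type*} [Fintype U] [Fintype V]
    {T : U → U → Prop} (hT : ∀ a b, T a b → ¬ T b a) (hG : (SimpleGraph.fromRel T).IsTree) {Δ : ℕ}
    (hΔ : ∀ v, {u | T v u}.ncard + {u | T u v}.ncard ≤ Δ)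
    (hUV : Fintype.card U ≤ Fintype.card V) {m : ℕ} (hm : 0 < m) (hmU : m < Fintype.card U)
    {κ : ℝ} (hκ : κ ∈ Set.Icc 0 1) {D : V → V → Prop}
    (hD : ∀ v, κ * Fintype.card V + m ≤ {x | D v x}.ncard ∧
      κ * Fintype.card V + m ≤ {x | D x v}.ncard)
    {η : ℝ} (hη : 0 ≤ η) {k₀ b : ℕ} (hk₀ : k₀ * (1 + η) ≤ η * (Fintype.card V - m))
    (hpot : ∀ σ : ℕ, m ≤ (σ * (Δ + 2) ^ 2 + 2) * Δ →
      2 * Fintype.card V ^ 2 * (1 - κ ^ (Δ + 2) / 2) ^ σ * (1 + η) ^ m ≤ (1 / 2) ^ (b + k₀))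
    {p : ℝ} (hp : 0 ≤ p) (hpΔ : p * (4 * (Δ + 1)) ≤ 1) :
    1 - ENNReal.ofReal ((1 / 2) ^ b * (1 + (1 - p) ^ k₀) ^ Fintype.card U) ≤
      (Measure.pi fun _ : V × V => coinMeasure (p * (4 * (Δ + 1))))
        {ω | ∃ ψ : U → V, Injective ψ ∧
          ∀ a b, T a b → (D (ψ a) (ψ b) ∨ ω (ψ a, ψ b) = true)} := by
  classical
  obtain ⟨f, par, h⟩ := IsBFSOrder.exists_card hG.connected
  have hchildren : ∀ s, #((h.orderedTree T).children s) ≤ Δ := fun s =>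
    (h.card_children_orderedTree_le s).trans (hΔ _)
  obtain ⟨S, hS, hcardS⟩ := OrderedTree.exists_isSwitchSet hchildren hm hmU
  have hdeg : ∀ d x, κ * Fintype.card V + m ≤ #(nbrs {e | D e.1 e.2} d x) := by
    rintro (_ | _) x
    · exact card_nbrs_false D x ▸ (hD x).2
    · exact card_nbrs_true D x ▸ (hD x).1
  have : Nonempty V := Fintype.card_pos_iff.1 (by omega)
  have hreach := hS.reaches_empty hdeg hchildren hUV hm hmU.le hκ hη hk₀ (hpot _ hcardS)
  have hrounds : (Fintype.card (Bool × Bool × Fin (Δ + 1)) : ℝ) = 4 * (Δ + 1) := by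
    rw [Fintype.card_prod, Fintype.card_prod, Fintype.card_bool, Fintype.card_fin]
    push_cast
    ring
  have hp₁ : p ≤ 1 := by
    refine (le_mul_of_one_le_right hp ?_).trans hpΔ
    linarith [(Δ.cast_nonneg : (0 : ℝ) ≤ Δ)]
  rw [← hrounds] at hpΔ ⊢
  refine (hreach.le_pi_coinMeasure hp hp₁ hpΔ (OrderedTree.isUpperSet_completions _)).trans
    (measure_mono ?_)
  rintro ω ⟨φ, hφ⟩
  obtain ⟨ψ, hψ, hψT⟩ := hφ.exists_injective_hom hT hG
  refine ⟨ψ, hψ, fun a b hab => (hψT a b hab).imp id fun hω => ?_⟩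
  simpa using hω

end FiniteBound

section Asymptotics

open Filter

theorem one_add_pow_le_exp {x : ℝ} (hx : -1 ≤ x) (n : ℕ) : (1 + x) ^ n ≤ Real.exp (n * x) := by
  rw [Real.exp_nat_mul]
  exact pow_le_pow_left₀ (by linarith) (by linarith [Real.add_one_le_exp x]) n

theorem half_pow_le_exp (h : ℕ) : (1 / 2 : ℝ) ^ h ≤ Real.exp (-(h / 2)) :=
  calc (1 / 2 : ℝ) ^ h = (1 + -(1 / 2)) ^ h := by norm_num
    _ ≤ Real.exp (h * -(1 / 2)) := one_add_pow_le_exp (by norm_num) h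
    _ = Real.exp (-(h / 2)) := by ring_nf

theorem exp_neg_le_half_pow (h : ℕ) : Real.exp (-h) ≤ (1 / 2) ^ h := by
  rw [Real.exp_neg, one_div, inv_pow]
  gcongr
  calc (2 : ℝ) ^ h = (1 + 1) ^ h := by norm_num
    _ ≤ Real.exp (h * 1) := one_add_pow_le_exp (by norm_num) h
    _ = Real.exp h := by rw [mul_one]

theorem exp_neg_le_inv {y : ℝ} (hy : 0 < y) : Real.exp (-y) ≤ y⁻¹ := by
  rw [Real.exp_neg]
  gcongr
  linarith [Real.add_one_le_exp y]

theorem eventually_half_mul_le_floor {a : ℝ} (ha : 0 < a) :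
    ∀ᶠ n : ℕ in atTop, a * n / 2 ≤ ⌊a * n⌋₊ := by
  filter_upwards [eventually_ge_atTop ⌈2 / a⌉₊] with n hn
  have hn' : 2 / a ≤ n := Nat.ceil_le.1 hn
  rw [div_le_iff₀ ha] at hn'
  linarith [Nat.sub_one_lt_floor (a * n)]

theorem eventually_two_mul_sq_mul_exp_neg_le_one {a : ℝ} (ha : 0 < a) :
    ∀ᶠ n : ℕ in atTop, 2 * (n : ℝ) ^ 2 * Real.exp (-(a * n)) ≤ 1 := by
  have hlim := ((Real.tendsto_pow_mul_exp_neg_atTop_nhds_zero 2).const_mul (2 / a ^ 2)).comp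
    (tendsto_natCast_atTop_atTop.const_mul_atTop ha)
  rw [mul_zero] at hlim
  filter_upwards [hlim.eventually_le_const one_pos] with n hn
  calc 2 * (n : ℝ) ^ 2 * Real.exp (-(a * n))
      = 2 / a ^ 2 * ((a * n) ^ 2 * Real.exp (-(a * n))) := by field_simp
    _ ≤ 1 := hn

theorem eventually_two_mul_sq_mul_pow_le {a : ℝ} (ha : 0 < a) :
    ∀ᶠ n : ℕ in atTop, ∀ (θ : ℝ) (σ m h : ℕ), θ ≤ 1 → a * n ≤ θ * σ → m ≤ n → h ≤ a * n / 16 →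
      2 * (n : ℝ) ^ 2 * (1 - θ) ^ σ * (1 + a / 4) ^ m ≤ (1 / 2) ^ (h + h) := by
  filter_upwards [eventually_two_mul_sq_mul_exp_neg_le_one (half_pos ha)] with n hn θ σ m h hθ hσ
    hm hh
  have hm' : (m : ℝ) ≤ n := by exact_mod_cast hm
  have hgrow : (1 + a / 4) ^ m ≤ Real.exp (a * n / 4) :=
    (one_add_pow_le_exp (by linarith) m).trans (Real.exp_le_exp.2 (by nlinarith))
  have hmiss : (1 - θ) ^ σ ≤ Real.exp (-(a * n)) :=
    (one_add_pow_le_exp (neg_le_neg hθ) σ).trans (Real.exp_le_exp.2 (by linarith))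
  calc 2 * (n : ℝ) ^ 2 * (1 - θ) ^ σ * (1 + a / 4) ^ m
      ≤ 2 * (n : ℝ) ^ 2 * Real.exp (-(a * n)) * Real.exp (a * n / 4) := by gcongr
    _ = 2 * (n : ℝ) ^ 2 * Real.exp (-(a / 2 * n)) * Real.exp (-(a * n / 4)) := by
        simp only [mul_assoc, ← Real.exp_add]
        ring_nf
    _ ≤ Real.exp (-(a * n / 4)) := mul_le_of_le_one_left (Real.exp_pos _).le hn
    _ ≤ Real.exp (-(h + h : ℕ)) := Real.exp_le_exp.2 (by push_cast; linarith)
    _ ≤ (1 / 2) ^ (h + h) := exp_neg_le_half_pow _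

theorem eventually_half_pow_mul_pow_le {a ε : ℝ} (ha : 0 < a) (hε : 0 < ε) :
    ∀ᶠ n : ℕ in atTop, ∀ (q : ℝ) (h : ℕ), 0 ≤ q → q ≤ a / 128 → a * n / 32 ≤ h →
      (1 / 2) ^ h * (1 + q) ^ n ≤ ε := by
  have hlim := Real.tendsto_exp_neg_atTop_nhds_zero.comp
    (tendsto_natCast_atTop_atTop.const_mul_atTop (show 0 < a / 128 by positivity))
  filter_upwards [hlim.eventually_le_const hε] with n hn q h hq₀ hq hh
  calc (1 / 2 : ℝ) ^ h * (1 + q) ^ n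
      ≤ Real.exp (-(h / 2)) * Real.exp (n * q) := by
        gcongr
        · exact half_pow_le_exp h
        · exact one_add_pow_le_exp (by linarith) n
    _ ≤ Real.exp (-(a / 128 * n)) := by
        rw [← Real.exp_add, Real.exp_le_exp]
        nlinarith [mul_le_mul_of_nonneg_left hq (n.cast_nonneg : (0 : ℝ) ≤ n)]
    _ ≤ ε := hn

theorem one_sub_pow_le_of_inv_le_mul {p δ : ℝ} (hp : p ≤ 1) (hδ : 0 < δ) {h : ℕ}
    (hh : δ⁻¹ ≤ h * p) : (1 - p) ^ h ≤ δ :=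
  calc (1 - p) ^ h ≤ Real.exp (h * -p) := one_add_pow_le_exp (neg_le_neg hp) h
    _ ≤ Real.exp (-δ⁻¹) := Real.exp_le_exp.2 (by linarith)
    _ ≤ δ := (exp_neg_le_inv (inv_pos.2 hδ)).trans_eq (inv_inv δ)

end Asymptotics

section Parameters

open Filter

theorem le_eight_mul_of_le_mul_add_two_mul {x : ℝ} {m σ Δ : ℕ} (hm : x / 4 ≤ m) (hx : 16 * Δ ≤ x)
    (hσ : m ≤ (σ * (Δ + 2) ^ 2 + 2) * Δ) : x ≤ 8 * ((Δ + 1) * (Δ + 2) ^ 2) * σ := by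
  have hσ' : (m : ℝ) ≤ (σ * (Δ + 2) ^ 2 + 2) * Δ := by exact_mod_cast hσ
  have : (0 : ℝ) ≤ σ * (Δ + 2) ^ 2 := by positivity
  linarith

theorem exists_eventually_two_mul_sq_mul_pow_le {α : ℝ} (hα : 0 < α) (hα₁ : α < 1) (Δ : ℕ) :
    ∃ a ∈ Set.Ioc (0 : ℝ) 1, ∀ᶠ n : ℕ in atTop, ∀ m h : ℕ, α / 2 * n / 2 ≤ m → m ≤ n →
      h ≤ a / 16 * n → ∀ σ : ℕ, m ≤ (σ * (Δ + 2) ^ 2 + 2) * Δ →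
        2 * (n : ℝ) ^ 2 * (1 - (α / 2) ^ (Δ + 2) / 2) ^ σ * (1 + a / 4) ^ m ≤
          (1 / 2) ^ (h + h) := by
  set θ : ℝ := (α / 2) ^ (Δ + 2) / 2 with hθ
  set M : ℝ := 8 * ((Δ + 1) * (Δ + 2) ^ 2)
  have hθ₀ : 0 < θ := by positivity
  have hθ₁ : θ ≤ 1 := by
    linarith [pow_le_one₀ (n := Δ + 2) (half_pos hα).le (by linarith)]
  have hM₁ : 1 ≤ M := by
    have : (1 : ℝ) ≤ (Δ + 1) * (Δ + 2) ^ 2 := by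
      exact_mod_cast Nat.succ_le_of_lt (by positivity)
    linarith
  refine ⟨θ * α / M, ⟨by positivity, div_le_one_of_le₀ ?_ (by positivity)⟩, ?_⟩
  · exact (mul_le_one₀ hθ₁ hα.le hα₁.le).trans hM₁
  filter_upwards [eventually_two_mul_sq_mul_pow_le (a := θ * α / M) (by positivity),
    (tendsto_natCast_atTop_atTop.const_mul_atTop hα).eventually_ge_atTop (16 * Δ : ℝ)]
    with n hpot hn m h hm hmn hh σ hσ
  refine hpot θ σ m h hθ₁ ?_ hmn (by linarith)
  have := le_eight_mul_of_le_mul_add_two_mul (by linarith) hn hσ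
  calc θ * α / M * n = θ * (α * n) / M := by ring
    _ ≤ θ * (M * σ) / M := by gcongr
    _ = θ * σ := by field_simp

theorem exists_pos_eventually_exists_parameters {α : ℝ} (hα : 0 < α) (hα₁ : α < 1) (Δ : ℕ) :
    ∃ c > (0 : ℝ), ∀ ε > (0 : ℝ), ∀ᶠ n : ℕ in atTop, c / n ≤ 1 ∧ ∃ (m h : ℕ) (η : ℝ),
      0 < m ∧ m ≤ α / 2 * n ∧ 0 ≤ η ∧ h * (1 + η) ≤ η * (n - m) ∧
      (∀ σ : ℕ, m ≤ (σ * (Δ + 2) ^ 2 + 2) * Δ →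
        2 * (n : ℝ) ^ 2 * (1 - (α / 2) ^ (Δ + 2) / 2) ^ σ * (1 + η) ^ m ≤ (1 / 2) ^ (h + h)) ∧
      (1 / 2) ^ h * (1 + (1 - c / n / (4 * (Δ + 1))) ^ h) ^ n ≤ ε := by
  obtain ⟨a, ⟨ha, ha₁⟩, hpot⟩ := exists_eventually_two_mul_sq_mul_pow_le hα hα₁ Δ
  refine ⟨128 ^ 2 * (Δ + 1) / a ^ 2, by positivity, fun ε hε => ?_⟩
  set c : ℝ := 128 ^ 2 * (Δ + 1) / a ^ 2 with hc
  filter_upwards [hpot, eventually_half_pow_mul_pow_le ha hε,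
    eventually_half_mul_le_floor (half_pos hα), eventually_half_mul_le_floor (a := a / 16)
      (by positivity), tendsto_natCast_atTop_atTop.eventually_ge_atTop c, eventually_gt_atTop 0]
    with n hpot hfail hm hh hcn hn
  have hn₀ : (0 : ℝ) < n := Nat.cast_pos.2 hn
  have hmα : (⌊α / 2 * n⌋₊ : ℝ) ≤ α / 2 * n := Nat.floor_le (by positivity)
  have hha : (⌊a / 16 * n⌋₊ : ℝ) ≤ a / 16 * n := Nat.floor_le (by positivity)
  set m := ⌊α / 2 * n⌋₊
  set h := ⌊a / 16 * n⌋₊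
  have hmn : (m : ℝ) ≤ n / 2 := by nlinarith
  have hcn₁ : c / n ≤ 1 := (div_le_one hn₀).2 hcn
  have hp₁ : c / n / (4 * (Δ + 1)) ≤ 1 :=
    div_le_one_of_le₀ (by linarith [(Δ.cast_nonneg : (0 : ℝ) ≤ Δ)]) (by positivity)
  refine ⟨hcn₁, m, h, a / 4, ?_, hmα, by positivity, ?_, ?_, ?_⟩
  · exact Nat.cast_pos.1 (lt_of_lt_of_le (by positivity) hm)
  · calc (h : ℝ) * (1 + a / 4) ≤ a / 16 * n * (1 + 1) := by gcongr; linarith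
      _ = a / 4 * (n / 2) := by ring
      _ ≤ a / 4 * (n - m) := by gcongr; linarith
  · exact hpot m h hm (by exact_mod_cast hmn.trans (half_le_self hn₀.le)) hha
  · refine hfail _ h (pow_nonneg (sub_nonneg.2 hp₁) h)
      (one_sub_pow_le_of_inv_le_mul hp₁ (by positivity) ?_) (by linarith)
    calc (a / 128)⁻¹ = a / 16 * n / 2 * (c / n / (4 * (Δ + 1))) := by
          rw [hc]
          field_simp
          norm_num
      _ ≤ h * (c / n / (4 * (Δ + 1))) := by gcongr

end Parameters

/-- Main theorem: for every `0 < α < 1` and `Δ`, there is `c = c(α, Δ)` such that w.h.p. a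
digraph with minimum semidegree at least `αn`, perturbed by the binomial random digraph
`D(n, c/n)`, contains every fixed `n`-vertex oriented tree of maximum total degree at most `Δ`. -/
theorem stmt_12 (α : ℝ) (hα : 0 < α ∧ α < 1) (Δ : ℕ) :
    ∃ c : ℝ, 0 < c ∧ ∀ ε : ℝ, 0 < ε → ∃ n₀ : ℕ, ∀ n : ℕ, n₀ ≤ n →
    ∀ Dα : Fin n → Fin n → Prop, (∀ a, ¬ Dα a a) →
      (∀ v : Fin n, α * n ≤ ({x | Dα v x}.ncard : ℝ) ∧ α * n ≤ ({x | Dα x v}.ncard : ℝ)) →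
    ∀ T : Fin n → Fin n → Prop, (∀ a, ¬ T a a) → (∀ a b, T a b → ¬ T b a) →
      (SimpleGraph.fromRel T).IsTree →
      (∀ v : Fin n, {u | T v u}.ncard + {u | T u v}.ncard ≤ Δ) →
    1 - ENNReal.ofReal ε ≤
      (Measure.pi fun _ : Fin n × Fin n =>
          (ENNReal.ofReal (c / n)) • Measure.dirac true +
          (ENNReal.ofReal (1 - c / n)) • Measure.dirac false)
        {ω | ∃ φ : Fin n → Fin n, Function.Injective φ ∧
          ∀ a b, T a b → (Dα (φ a) (φ b) ∨ ω (φ a, φ b) = true)} := by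
  obtain ⟨c, hc, hparam⟩ := exists_pos_eventually_exists_parameters hα.1 hα.2 Δ
  refine ⟨c, hc, fun ε hε => Filter.eventually_atTop.1 ?_⟩
  filter_upwards [hparam ε hε] with n hn D _ hD T _ hT hG hΔ
  obtain ⟨hcn, m, h, η, hm, hmα, hη, hh, hpot, hfail⟩ := hn
  have hp : c / n / (4 * (Δ + 1)) * (4 * (Δ + 1)) = c / n := div_mul_cancel₀ _ (by positivity)
  have hmn : m < n := by
    have : (0 : ℝ) < m := Nat.cast_pos.2 hm
    exact_mod_cast (show (m : ℝ) < n by nlinarith [hα.2])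
  have hprob := one_sub_le_pi_coinMeasure_exists_injective_hom (V := Fin n) (κ := α / 2)
    (p := c / n / (4 * (Δ + 1))) (D := D) (m := m) (k₀ := h) (b := h) hT hG hΔ le_rfl hm
    (by simpa using hmn) ⟨by linarith [hα.1], by linarith [hα.2]⟩
    (fun v => by
      rw [Fintype.card_fin]
      exact ⟨by linarith [(hD v).1], by linarith [(hD v).2]⟩)
    hη (by simpa using hh) (by simpa using hpot) (by positivity) (hp.trans_le hcn)
  rw [hp, Fintype.card_fin] at hprob
  exact (tsub_le_tsub_left (ENNReal.ofReal_le_ofReal hfail) 1).trans hprob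
end
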